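/- Let the setting be type A_N or type B_N and let (i_t,k_t), 1 ≤ t ≤ T, be a snake. For any two non-overlapping tuples (p_1,…,p_T) and (p′_1,…,p′_T) in P̄_{(i_t,k_t)}, the tuple (p_1,…,p_T) can be obtained from (p′_1,…,p′_T) by a finite sequence of raising and lowering moves at points of W such that no point of W occurs in the sequence both as the site of a raising move and as the site of a lowering move, and such that every intermediate tuple is non-overlapping. -/

import Mathlib

namespace Paper

/-- The ambient setting: type `A N` (with `N ≥ 1`) or type `B N ε`
(with `N ≥ 2` and `0 < ε < 1/2`). -/
inductive Setting where
  | A (N : ℕ)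
  | B (N : ℕ) (ε : ℝ)

namespace Setting

/-- The rank `N`. -/
def N : Setting → ℕ
  | A n => n
  | B n _ => n

/-- Validity of the parameters of the setting. -/
def valid : Setting → Prop
  | A n => 1 ≤ n
  | B n ε => 2 ≤ n ∧ 0 < ε ∧ ε < 1 / 2

end Setting

/-- The numbers `r_i` : in type A all equal `1`; in type B, `r_N = 1` and `r_i = 2` for `i < N`. -/
def rr : Setting → ℕ → ℕ
  | .A _, _ => 1
  | .B n _, j => if j = n then 1 else 2

/-- The set `X` in type `A_N`. -/
def XA (n : ℕ) : Set (ℕ × ℤ) :=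
  {ik | 1 ≤ ik.1 ∧ ik.1 ≤ n ∧ ((ik.1 : ℤ) - ik.2) % 2 = 1}

/-- The set `X` in type `B_N`. -/
def XB (n : ℕ) : Set (ℕ × ℤ) :=
  {ik | (ik.1 = n ∧ ik.2 % 2 = 1) ∨ (1 ≤ ik.1 ∧ ik.1 < n ∧ ik.2 % 2 = 0)}

/-- The set `X ⊆ I × ℤ`. -/
def X : Setting → Set (ℕ × ℤ)
  | .A n => XA n
  | .B n _ => XB n

/-- The set `W = {(i,k) : (i, k - r_i) ∈ X}`. -/
def W (S : Setting) : Set (ℕ × ℤ) :=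
  {ik | (ik.1, ik.2 - (rr S ik.1 : ℤ)) ∈ X S}

/-- The `r`-th point of a path (a finite list of points of the plane). -/
def pt (p : List (ℝ × ℝ)) (r : ℕ) : ℝ × ℝ := p.getD r (0, 0)

/-- The set of paths `𝒫_{i,k}` in type `A_N`. -/
def pathsA (n : ℕ) (i : ℕ) (k : ℤ) : Set (List (ℝ × ℝ)) :=
  {p | p.length = n + 2 ∧
    (∀ r, r < n + 2 → (pt p r).1 = (r : ℝ)) ∧
    (pt p 0).2 = (i : ℝ) + (k : ℝ) ∧
    (pt p (n + 1)).2 = (n : ℝ) + 1 - (i : ℝ) + (k : ℝ) ∧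
    (∀ r, r ≤ n → (pt p (r + 1)).2 - (pt p r).2 = 1 ∨ (pt p (r + 1)).2 - (pt p r).2 = -1)}

/-- The set of paths `𝒫_{N,ℓ}` in type `B_N`. -/
def pathsBspin (n : ℕ) (ε : ℝ) (l : ℤ) : Set (List (ℝ × ℝ)) :=
  {p | p.length = n + 1 ∧
    (if l % 4 = 3 then ∀ r, r < n → (pt p r).1 = 2 * (r : ℝ)
     else ∀ r, r < n → (pt p r).1 = 4 * (n : ℝ) - 2 - 2 * (r : ℝ)) ∧
    (pt p n).1 = 2 * (n : ℝ) - 1 ∧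
    (pt p 0).2 = (l : ℝ) + 2 * (n : ℝ) - 1 ∧
    (∀ r, r + 2 ≤ n → (pt p (r + 1)).2 - (pt p r).2 = 2 ∨ (pt p (r + 1)).2 - (pt p r).2 = -2) ∧
    ((pt p n).2 - (pt p (n - 1)).2 = 1 + ε ∨ (pt p n).2 - (pt p (n - 1)).2 = -(1 + ε))}

/-- The set of paths `𝒫_{i,k}` in type `B_N`. -/
def pathsB (n : ℕ) (ε : ℝ) (i : ℕ) (k : ℤ) : Set (List (ℝ × ℝ)) :=
  if i = n then pathsBspin n ε k
  else {p | ∃ a b : List (ℝ × ℝ),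
    a ∈ pathsBspin n ε (k - (2 * (n : ℤ) - 2 * (i : ℤ) - 1)) ∧
    b ∈ pathsBspin n ε (k + (2 * (n : ℤ) - 2 * (i : ℤ) - 1)) ∧
    p = a ++ b.reverse ∧
    (pt a n).1 = (pt b n).1 ∧ 0 < (pt a n).2 - (pt b n).2}

/-- The set of paths `𝒫_{i,k}`. -/
def P : Setting → ℕ → ℤ → Set (List (ℝ × ℝ))
  | .A n => pathsA n
  | .B n ε => pathsB n ε

/-- The map `ι : X → ℤ × ℤ` of type `B_N`. -/
def iotaB (n : ℕ) (ik : ℕ × ℤ) : ℤ × ℤ :=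
  if ik.1 = n then (2 * (n : ℤ) - 1, ik.2)
  else if (2 * (n : ℤ) + ik.2 - 2 * (ik.1 : ℤ)) % 4 = 2 then (2 * (ik.1 : ℤ), ik.2)
  else (4 * (n : ℤ) - 2 - 2 * (ik.1 : ℤ), ik.2)

/-- The corners of a path: `Cp S p true` is the set `C_{p,+}` of upper corners, and
`Cp S p false` is the set `C_{p,-}` of lower corners. -/
def Cp (S : Setting) (p : List (ℝ × ℝ)) (up : Bool) : Set (ℕ × ℤ) :=
  match S with
  | .A n =>
    {jl | 1 ≤ jl.1 ∧ jl.1 ≤ n ∧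
      pt p jl.1 = ((jl.1 : ℝ), (jl.2 : ℝ)) ∧
      (pt p (jl.1 - 1)).2 = (jl.2 : ℝ) + (if up then 1 else -1) ∧
      (pt p (jl.1 + 1)).2 = (jl.2 : ℝ) + (if up then 1 else -1)}
  | .B n ε =>
    {jl | jl ∈ XB n ∧
      ((∃ r : ℕ, 1 ≤ r ∧ r + 1 < p.length ∧
          pt p r = (((iotaB n jl).1 : ℝ), ((iotaB n jl).2 : ℝ)) ∧
          (iotaB n jl).1 ≠ 0 ∧ (iotaB n jl).1 ≠ 2 * (n : ℤ) - 1 ∧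
          (iotaB n jl).1 ≠ 4 * (n : ℤ) - 2 ∧
          (if up then (pt p r).2 < (pt p (r - 1)).2 ∧ (pt p r).2 < (pt p (r + 1)).2
           else (pt p (r - 1)).2 < (pt p r).2 ∧ (pt p (r + 1)).2 < (pt p r).2))
       ∨ (jl.1 = n ∧
          (if up then (2 * (n : ℝ) - 1, (jl.2 : ℝ) - ε) ∈ p ∧ (2 * (n : ℝ) - 1, (jl.2 : ℝ) + ε) ∉ p
           else (2 * (n : ℝ) - 1, (jl.2 : ℝ) + ε) ∈ p ∧ (2 * (n : ℝ) - 1, (jl.2 : ℝ) - ε) ∉ p)))}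

/-- `p'` is obtained from `p` by replacing the point `q` by the point `q'`. -/
def Replace1 (p p' : List (ℝ × ℝ)) (q q' : ℝ × ℝ) : Prop :=
  ∃ r : ℕ, r < p.length ∧ pt p r = q ∧ p'.length = p.length ∧ pt p' r = q' ∧
    ∀ s, s < p.length → s ≠ r → pt p' s = pt p s

/-- `p'` is obtained from `p` by replacing the point `q1` by `q1'` and the point `q2` by `q2'`. -/
def Replace2 (p p' : List (ℝ × ℝ)) (q1 q1' q2 q2' : ℝ × ℝ) : Prop :=
  ∃ r s : ℕ, r < p.length ∧ s < p.length ∧ r ≠ s ∧ pt p r = q1 ∧ pt p s = q2 ∧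
    p'.length = p.length ∧ pt p' r = q1' ∧ pt p' s = q2' ∧
    ∀ u, u < p.length → u ≠ r → u ≠ s → pt p' u = pt p u

/-- The path `p` can be lowered at `(j, l)`: `(j, l - r_j) ∈ C_{p,+}` and
`(j, l + r_j) ∉ C_{p,+}`. -/
def CanLower (S : Setting) (p : List (ℝ × ℝ)) (j : ℕ) (l : ℤ) : Prop :=
  (j, l - (rr S j : ℤ)) ∈ Cp S p true ∧ (j, l + (rr S j : ℤ)) ∉ Cp S p true

/-- `p'` is the result of the lowering move at `(j,l)` applied to the path `p ∈ 𝒫_{i,k}`;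
written `p' = p 𝒜_{j,l}⁻¹`. -/
def LoweredTo (S : Setting) (i : ℕ) (k : ℤ) (j : ℕ) (l : ℤ)
    (p p' : List (ℝ × ℝ)) : Prop :=
  p ∈ P S i k ∧ p' ∈ P S i k ∧ CanLower S p j l ∧
  (match S with
   | .A _ => Replace1 p p' ((j : ℝ), (l : ℝ) - 1) ((j : ℝ), (l : ℝ) + 1)
   | .B n ε =>
     if j = n then
       Replace1 p p' (2 * (n : ℝ) - 1, (l : ℝ) - 1 - ε) (2 * (n : ℝ) - 1, (l : ℝ) + 1 + ε)
     else if j = n - 1 then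
       Replace2 p p'
         (((iotaB n (j, l - 2)).1 : ℝ), (l : ℝ) - 2) (((iotaB n (j, l - 2)).1 : ℝ), (l : ℝ) + 2)
         (2 * (n : ℝ) - 1, (l : ℝ) - 1 + ε) (2 * (n : ℝ) - 1, (l : ℝ) + 1 - ε)
     else
       Replace1 p p'
         (((iotaB n (j, l - 2)).1 : ℝ), (l : ℝ) - 2) (((iotaB n (j, l - 2)).1 : ℝ), (l : ℝ) + 2))

/-- The path `p` can be raised at `(j,l)`: it is of the form `p' 𝒜_{j,l}⁻¹`. -/
def CanRaise (S : Setting) (i : ℕ) (k : ℤ) (p : List (ℝ × ℝ)) (j : ℕ) (l : ℤ) : Prop :=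
  ∃ p', LoweredTo S i k j l p' p

/-- The monomial group `ℳ`, realised as exponent functions: the free abelian group on the
symbols `Y_{i,k}`, `(i,k) ∈ X`, is identified with finitely supported functions `(ℕ × ℤ) → ℤ`,
written additively. -/
def Y (x : ℕ × ℤ) : (ℕ × ℤ) → ℤ := fun z => if z = x then 1 else 0

noncomputable def ind (s : Prop) : ℤ := @ite ℤ s (Classical.propDecidable s) 1 0

/-- The monomial `m(p)` of a path: `∏ Y_{j,l}` over upper corners times `∏ Y_{j,l}⁻¹`
over lower corners. -/
noncomputable def mon (S : Setting) (p : List (ℝ × ℝ)) : (ℕ × ℤ) → ℤ :=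
  fun x => ind (x ∈ Cp S p true) - ind (x ∈ Cp S p false)

/-- The monomials `A_{j,l}`, with the conventions `Y_{0,·} = Y_{N+1,·} = 1`. -/
def Amon (S : Setting) (j : ℕ) (l : ℤ) : (ℕ × ℤ) → ℤ :=
  match S with
  | .A n =>
      Y (j, l + 1) + Y (j, l - 1) - (if j = 1 then 0 else Y (j - 1, l))
        - (if j = n then 0 else Y (j + 1, l))
  | .B n _ =>
      if j = n then Y (n, l + 1) + Y (n, l - 1) - Y (n - 1, l)
      else if j = n - 1 then
        Y (n - 1, l + 2) + Y (n - 1, l - 2) - (if j = 1 then 0 else Y (n - 2, l))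
          - Y (n, l + 1) - Y (n, l - 1)
      else
        Y (j, l + 2) + Y (j, l - 2) - (if j = 1 then 0 else Y (j - 1, l)) - Y (j + 1, l)

/-- A monomial is dominant iff all its exponents are nonnegative. -/
def Dominant (m : (ℕ × ℤ) → ℤ) : Prop := ∀ x, 0 ≤ m x

/-- A monomial is anti-dominant iff all its exponents are nonpositive. -/
def AntiDominant (m : (ℕ × ℤ) → ℤ) : Prop := ∀ x, m x ≤ 0

/-- `(i',k')` is in snake position with respect to `(i,k)`. -/
def SnakePos : Setting → ℕ × ℤ → ℕ × ℤ → Prop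
  | .A _, ik, ik' => |(ik'.1 : ℤ) - (ik.1 : ℤ)| + 2 ≤ ik'.2 - ik.2
  | .B n _, ik, ik' =>
      if ik.1 = n ∧ ik'.1 = n then
        2 ≤ ik'.2 - ik.2 ∧ (ik'.2 - ik.2) % 4 = 2
      else if ik.1 = n ∨ ik'.1 = n then
        2 * |(ik'.1 : ℤ) - (ik.1 : ℤ)| + 3 ≤ ik'.2 - ik.2 ∧
          (ik'.2 - ik.2) % 4 = (2 * |(ik'.1 : ℤ) - (ik.1 : ℤ)| - 1) % 4
      else
        2 * |(ik'.1 : ℤ) - (ik.1 : ℤ)| + 4 ≤ ik'.2 - ik.2 ∧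
          (ik'.2 - ik.2) % 4 = (2 * |(ik'.1 : ℤ) - (ik.1 : ℤ)|) % 4

/-- A snake: a sequence of points of `X`, each in snake position w.r.t. the previous one. -/
def IsSnake (S : Setting) {T : ℕ} (w : Fin T → ℕ × ℤ) : Prop :=
  (∀ t, w t ∈ X S) ∧
  ∀ (t : Fin T) (h : (t : ℕ) + 1 < T), SnakePos S (w t) (w ⟨(t : ℕ) + 1, h⟩)

/-- `p` is strictly above `p'`. -/
def StrictlyAbove (p p' : List (ℝ × ℝ)) : Prop :=
  ∀ a ∈ p, ∀ b ∈ p', a.1 = b.1 → a.2 < b.2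

/-- A tuple of paths is non-overlapping. -/
def NonOverlapping {T : ℕ} (ps : Fin T → List (ℝ × ℝ)) : Prop :=
  ∀ s t : Fin T, s < t → StrictlyAbove (ps s) (ps t)

/-- The set `𝒫̄` of non-overlapping tuples of paths attached to a snake. -/
def PBar (S : Setting) {T : ℕ} (w : Fin T → ℕ × ℤ) : Set (Fin T → List (ℝ × ℝ)) :=
  {ps | (∀ t, ps t ∈ P S (w t).1 (w t).2) ∧ NonOverlapping ps}

/-- The product `∏_t m(p_t)` of the monomials of a tuple of paths. -/
noncomputable def tmon (S : Setting) {T : ℕ} (ps : Fin T → List (ℝ × ℝ)) : (ℕ × ℤ) → ℤ :=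
  ∑ t, mon S (ps t)

/-- Lowering move at `jl` on a tuple of paths: one component is lowered, the others
are unchanged. -/
def TLoweredTo (S : Setting) {T : ℕ} (w : Fin T → ℕ × ℤ) (jl : ℕ × ℤ)
    (ps ps' : Fin T → List (ℝ × ℝ)) : Prop :=
  ∃ t, LoweredTo S (w t).1 (w t).2 jl.1 jl.2 (ps t) (ps' t) ∧ ∀ s, s ≠ t → ps' s = ps s

/-- Sequences of raising/lowering moves on a single path; the list records, for each move,
whether it was a lowering move (`true`) or a raising move (`false`), and its site. -/
inductive MoveSeq (S : Setting) (i : ℕ) (k : ℤ) :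
    List (ℝ × ℝ) → List (ℝ × ℝ) → List (Bool × (ℕ × ℤ)) → Prop where
  | nil (p : List (ℝ × ℝ)) : MoveSeq S i k p p []
  | lower {p q r : List (ℝ × ℝ)} {jl : ℕ × ℤ} {ms : List (Bool × (ℕ × ℤ))} :
      jl ∈ W S → LoweredTo S i k jl.1 jl.2 p q → MoveSeq S i k q r ms →
      MoveSeq S i k p r ((true, jl) :: ms)
  | raise {p q r : List (ℝ × ℝ)} {jl : ℕ × ℤ} {ms : List (Bool × (ℕ × ℤ))} :
      jl ∈ W S → LoweredTo S i k jl.1 jl.2 q p → MoveSeq S i k q r ms →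
      MoveSeq S i k p r ((false, jl) :: ms)

/-- Sequences of raising/lowering moves on tuples of paths, all of whose intermediate
tuples are non-overlapping. -/
inductive TMoveSeq (S : Setting) {T : ℕ} (w : Fin T → ℕ × ℤ) :
    (Fin T → List (ℝ × ℝ)) → (Fin T → List (ℝ × ℝ)) → List (Bool × (ℕ × ℤ)) → Prop where
  | nil (ps : Fin T → List (ℝ × ℝ)) : TMoveSeq S w ps ps []
  | lower {ps qs rs : Fin T → List (ℝ × ℝ)} {jl : ℕ × ℤ} {ms : List (Bool × (ℕ × ℤ))} :
      jl ∈ W S → TLoweredTo S w jl ps qs → NonOverlapping qs →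
      TMoveSeq S w qs rs ms → TMoveSeq S w ps rs ((true, jl) :: ms)
  | raise {ps qs rs : Fin T → List (ℝ × ℝ)} {jl : ℕ × ℤ} {ms : List (Bool × (ℕ × ℤ))} :
      jl ∈ W S → TLoweredTo S w jl qs ps → NonOverlapping qs →
      TMoveSeq S w qs rs ms → TMoveSeq S w ps rs ((false, jl) :: ms)

/-- Sequences of lowering moves on tuples of paths, all of whose intermediate tuples
are non-overlapping; the list records the sites, in order. -/
inductive TLowerSeq (S : Setting) {T : ℕ} (w : Fin T → ℕ × ℤ) :
    (Fin T → List (ℝ × ℝ)) → (Fin T → List (ℝ × ℝ)) → List (ℕ × ℤ) → Prop where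
  | nil (ps : Fin T → List (ℝ × ℝ)) : TLowerSeq S w ps ps []
  | cons {ps qs rs : Fin T → List (ℝ × ℝ)} {jl : ℕ × ℤ} {ms : List (ℕ × ℤ)} :
      jl ∈ W S → TLoweredTo S w jl ps qs → NonOverlapping qs →
      TLowerSeq S w qs rs ms → TLowerSeq S w ps rs (jl :: ms)

/-- Weak order on paths with the same x-coordinates: `p` is weakly above `p'`. -/
def WeaklyAbove (p p' : List (ℝ × ℝ)) : Prop :=
  p.length = p'.length ∧ ∀ r, r < p.length → (pt p r).2 ≤ (pt p' r).2

/-- `p` is weakly below `p'`. -/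
def WeaklyBelow (p p' : List (ℝ × ℝ)) : Prop :=
  p.length = p'.length ∧ ∀ r, r < p.length → (pt p' r).2 ≤ (pt p r).2

/-- The path `top(p, p')`. -/
def topPath (p p' : List (ℝ × ℝ)) : List (ℝ × ℝ) :=
  List.zipWith (fun a b => (a.1, min a.2 b.2)) p p'

/-- The distinguished point contained in the highest path `p⁺_{i,k}`. -/
def highPoint : Setting → ℕ → ℤ → ℝ × ℝ
  | .A _, i, k => ((i : ℝ), (k : ℝ))
  | .B n ε, i, k =>
      if i = n then (2 * (n : ℝ) - 1, (k : ℝ) - ε)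
      else (((iotaB n (i, k)).1 : ℝ), ((iotaB n (i, k)).2 : ℝ))

/-- The distinguished point contained in the lowest path `p⁻_{i,k}`. -/
def lowPoint : Setting → ℕ → ℤ → ℝ × ℝ
  | .A n, i, k => ((n : ℝ) + 1 - (i : ℝ), (k : ℝ) + (n : ℝ) + 1)
  | .B n ε, i, k =>
      if i = n then (2 * (n : ℝ) - 1, (k : ℝ) + 4 * (n : ℝ) - 2 + ε)
      else (((iotaB n (i, k + 4 * (n : ℤ) - 2)).1 : ℝ),
            ((iotaB n (i, k + 4 * (n : ℤ) - 2)).2 : ℝ))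

/-- The highest path `p⁺_{i,k}` : the path of `𝒫_{i,k}` with no lower corners. -/
noncomputable def highestPath (S : Setting) (i : ℕ) (k : ℤ) : List (ℝ × ℝ) :=
  Classical.epsilon fun p => p ∈ P S i k ∧ Cp S p false = ∅

/-- The lowest path `p⁻_{i,k}` : the path of `𝒫_{i,k}` with no upper corners. -/
noncomputable def lowestPath (S : Setting) (i : ℕ) (k : ℤ) : List (ℝ × ℝ) :=
  Classical.epsilon fun p => p ∈ P S i k ∧ Cp S p true = ∅

/-!
To pass from `ps'` to `ps`, raise `ps'` to the tuple of componentwise highest points of `ps` and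
`ps'`, then lower the latter to `ps`. Sets of paths are closed under this maximum because each path
is coded by zigzag sequences of integers, which by parity cannot pass through each other between
two columns. A non-overlapping tuple that lies weakly above another one can be lowered to it: in the
lowest component where they differ, lower a highest point at which they differ. A site occurring
both as a raising and as a lowering site would be crossed by a point of the top tuple on its way to
`ps` and by one on its way to `ps'`. Points of one column keep their order, so a single point of the
top tuple would lie below the site in both `ps` and `ps'`, but it is a point of one of the two.
-/

/-! ### Points of paths -/

section Points

variable {p q p' q' s s' : List (ℝ × ℝ)} {r : ℕ}

theorem pt_eq_getElem (h : r < p.length) : pt p r = p[r] :=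
  List.getD_eq_getElem _ _ h

theorem mem_iff_exists_pt {a : ℝ × ℝ} : a ∈ p ↔ ∃ r < p.length, pt p r = a := by
  rw [List.mem_iff_getElem]
  exact exists_congr fun r => ⟨fun ⟨h, e⟩ => ⟨h, (pt_eq_getElem h).trans e⟩,
    fun ⟨h, e⟩ => ⟨h, (pt_eq_getElem h).symm.trans e⟩⟩

theorem pt_mem (h : r < p.length) : pt p r ∈ p :=
  mem_iff_exists_pt.2 ⟨r, h, rfl⟩

theorem pt_append_left (h : r < p.length) : pt (p ++ q) r = pt p r :=
  List.getD_append _ _ _ _ h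

theorem pt_append_right (h : p.length ≤ r) : pt (p ++ q) r = pt q (r - p.length) :=
  List.getD_append_right _ _ _ _ h

theorem pt_reverse (h : r < p.length) : pt p.reverse r = pt p (p.length - 1 - r) := by
  rw [pt_eq_getElem (by simpa using h), pt_eq_getElem (by lia), List.getElem_reverse]

theorem pt_reverse_sub (h : r < p.length) : pt p.reverse (p.length - 1 - r) = pt p r := by
  rw [pt_reverse (by lia)]
  congr 1
  lia

theorem pt_map_range {m : ℕ} (f : ℕ → ℝ × ℝ) (h : r < m) : pt ((List.range m).map f) r = f r := by
  simp [pt_eq_getElem, h]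

theorem eq_map_range {m : ℕ} {f : ℕ → ℝ × ℝ} (hl : p.length = m) (h : ∀ r < m, pt p r = f r) :
    p = (List.range m).map f :=
  List.ext_getElem (by simpa using hl) fun r hr _ => by
    simpa [← pt_eq_getElem hr] using h r (hl ▸ hr)

theorem pt_fst_eq (h : p.map Prod.fst = q.map Prod.fst) (r : ℕ) : (pt p r).1 = (pt q r).1 := by
  have hpt (l : List (ℝ × ℝ)) : (pt l r).1 = (l.map Prod.fst).getD r 0 := by
    rw [pt, ← List.getD_map (f := Prod.fst)]
  rw [hpt, hpt, h]

theorem length_eq_of_map_fst_eq (h : p.map Prod.fst = q.map Prod.fst) : p.length = q.length := by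
  simpa using congrArg List.length h

theorem weaklyAbove_iff_forall₂ : WeaklyAbove p q ↔ List.Forall₂ (fun a b => a.2 ≤ b.2) p q := by
  rw [List.forall₂_iff_get]
  refine and_congr_right fun hl => ?_
  simp only [List.get_eq_getElem]
  exact ⟨fun h i hp hq => by simpa only [pt_eq_getElem hp, pt_eq_getElem hq] using h i hp,
    fun h i hp => by
      simpa only [pt_eq_getElem hp, pt_eq_getElem (hl ▸ hp)] using h i hp (hl ▸ hp)⟩

theorem weaklyAbove_reverse : WeaklyAbove p.reverse q.reverse ↔ WeaklyAbove p q := by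
  simp only [weaklyAbove_iff_forall₂, List.forall₂_reverse_iff]

theorem weaklyAbove_append (h : p.length = p'.length) :
    WeaklyAbove (p ++ q) (p' ++ q') ↔ WeaklyAbove p p' ∧ WeaklyAbove q q' := by
  simp only [weaklyAbove_iff_forall₂]
  refine ⟨fun H => ?_, fun H => List.rel_append H.1 H.2⟩
  have htake := List.forall₂_take p.length H
  have hdrop := List.forall₂_drop p.length H
  rw [List.take_left, h, List.take_left] at htake
  rw [List.drop_left, h, List.drop_left] at hdrop
  exact ⟨htake, hdrop⟩

theorem weaklyAbove_map_range {m : ℕ} {f g : ℕ → ℝ × ℝ} :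
    WeaklyAbove ((List.range m).map f) ((List.range m).map g) ↔ ∀ r < m, (f r).2 ≤ (g r).2 := by
  rw [WeaklyAbove]
  simp +contextual only [List.length_map, List.length_range, true_and, pt_map_range]

theorem WeaklyAbove.refl (p : List (ℝ × ℝ)) : WeaklyAbove p p :=
  ⟨rfl, fun _ _ => le_rfl⟩

theorem WeaklyAbove.trans (hpq : WeaklyAbove p q) (hqs : WeaklyAbove q s) : WeaklyAbove p s :=
  ⟨hpq.1.trans hqs.1, fun r hr => (hpq.2 r hr).trans (hqs.2 r (hpq.1 ▸ hr))⟩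

theorem length_topPath (h : p.length = q.length) : (topPath p q).length = p.length := by
  simp [topPath, h]

theorem pt_topPath (h : p.length = q.length) (hr : r < p.length) :
    pt (topPath p q) r = ((pt p r).1, min (pt p r).2 (pt q r).2) := by
  rw [pt_eq_getElem (by rwa [length_topPath h]), pt_eq_getElem hr, pt_eq_getElem (h ▸ hr)]
  simp [topPath]

theorem topPath_weaklyAbove_left (h : p.length = q.length) : WeaklyAbove (topPath p q) p :=
  ⟨length_topPath h, fun r hr => by
    rw [pt_topPath h (length_topPath h ▸ hr)]; exact min_le_left _ _⟩

theorem topPath_weaklyAbove_right (h : p.length = q.length) : WeaklyAbove (topPath p q) q :=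
  ⟨(length_topPath h).trans h, fun r hr => by
    rw [pt_topPath h (length_topPath h ▸ hr)]; exact min_le_right _ _⟩

theorem topPath_append (h : p.length = p'.length) :
    topPath (p ++ q) (p' ++ q') = topPath p p' ++ topPath q q' :=
  List.zipWith_append h

theorem topPath_reverse (h : p.length = q.length) :
    topPath p.reverse q.reverse = (topPath p q).reverse :=
  (List.reverse_zipWith h).symm

theorem topPath_map_range (m : ℕ) (x y z : ℕ → ℝ) :
    topPath ((List.range m).map fun r => (x r, y r)) ((List.range m).map fun r => (x r, z r)) =
      (List.range m).map fun r => (x r, min (y r) (z r)) := by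
  simp [topPath, List.zipWith_map, List.zipWith_self]

theorem StrictlyAbove.mono_left (h : StrictlyAbove p s) (hc : p'.map Prod.fst = p.map Prod.fst)
    (hp : WeaklyAbove p' p) : StrictlyAbove p' s := by
  intro a ha b hb hab
  obtain ⟨r, hr, rfl⟩ := mem_iff_exists_pt.1 ha
  exact (hp.2 r hr).trans_lt <|
    h _ (pt_mem (hp.1 ▸ hr)) b hb ((pt_fst_eq hc r).symm.trans hab)

theorem StrictlyAbove.mono_right (h : StrictlyAbove s p) (hc : p.map Prod.fst = p'.map Prod.fst)
    (hp : WeaklyAbove p p') : StrictlyAbove s p' := by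
  intro a ha b hb hab
  obtain ⟨r, hr, rfl⟩ := mem_iff_exists_pt.1 hb
  rw [← hp.1] at hr
  exact (h a ha _ (pt_mem hr) (hab.trans (pt_fst_eq hc r).symm)).trans_le (hp.2 r hr)

theorem StrictlyAbove.topPath (h : StrictlyAbove p s) (h' : StrictlyAbove p' s')
    (hp : p.map Prod.fst = p'.map Prod.fst) (hs : s.map Prod.fst = s'.map Prod.fst) :
    StrictlyAbove (topPath p p') (topPath s s') := by
  have hlp := length_eq_of_map_fst_eq hp
  have hls := length_eq_of_map_fst_eq hs
  intro a ha b hb hab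
  obtain ⟨r, hr, rfl⟩ := mem_iff_exists_pt.1 ha
  obtain ⟨u, hu, rfl⟩ := mem_iff_exists_pt.1 hb
  rw [length_topPath hlp] at hr
  rw [length_topPath hls] at hu
  rw [pt_topPath hlp hr, pt_topPath hls hu] at hab ⊢
  refine min_lt_min (h _ (pt_mem hr) _ (pt_mem hu) hab)
    (h' _ (pt_mem (hlp ▸ hr)) _ (pt_mem (hls ▸ hu)) ?_)
  rw [← pt_fst_eq hp, ← pt_fst_eq hs, hab]

end Points

/-! ### Sites of lowering moves -/

section Sites

variable {S : Setting} {i j : ℕ} {k l : ℤ} {jl : ℕ × ℤ} {p p' q : List (ℝ × ℝ)}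
  {a a' b b' : ℝ × ℝ} {r s : ℕ}

/-- The point displaced by a lowering move at the site `jl`. At the sites of column `N - 1` of
type B, where two points move, this is the one of column `N - 1`. -/
noncomputable def movedFrom (S : Setting) (jl : ℕ × ℤ) : ℝ × ℝ :=
  match S with
  | .A _ => (jl.1, jl.2 - 1)
  | .B n ε =>
    if jl.1 = n then (2 * n - 1, jl.2 - 1 - ε)
    else ((iotaB n (jl.1, jl.2 - 2)).1, jl.2 - 2)

/-- The position to which a lowering move at the site `jl` brings the point `movedFrom S jl`. -/
noncomputable def movedTo (S : Setting) (jl : ℕ × ℤ) : ℝ × ℝ :=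
  match S with
  | .A _ => (jl.1, jl.2 + 1)
  | .B n ε =>
    if jl.1 = n then (2 * n - 1, jl.2 + 1 + ε)
    else ((iotaB n (jl.1, jl.2 - 2)).1, jl.2 + 2)

theorem movedFrom_snd_add_one_le (hS : S.valid) : (movedFrom S jl).2 + 1 ≤ (movedTo S jl).2 := by
  rcases S with n | ⟨n, ε⟩
  · simp only [movedFrom, movedTo]
    linarith
  · have hε : 0 < ε := hS.2.1
    simp only [movedFrom, movedTo]
    split_ifs <;> linarith

theorem Replace1.weaklyAbove (h : Replace1 p p' a a') (ha : a.2 ≤ a'.2) : WeaklyAbove p p' := by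
  obtain ⟨r, -, hpr, hl, hpr', hother⟩ := h
  refine ⟨hl.symm, fun s hs => ?_⟩
  by_cases hsr : s = r
  · rwa [hsr, hpr, hpr']
  · rw [hother s hs hsr]

theorem Replace2.weaklyAbove (h : Replace2 p p' a a' b b') (ha : a.2 ≤ a'.2) (hb : b.2 ≤ b'.2) :
    WeaklyAbove p p' := by
  obtain ⟨r, s, -, -, -, hpr, hps, hl, hpr', hps', hother⟩ := h
  refine ⟨hl.symm, fun u hu => ?_⟩
  by_cases hur : u = r
  · rwa [hur, hpr, hpr']
  by_cases hus : u = s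
  · rwa [hus, hps, hps']
  · rw [hother u hu hur hus]

theorem replace1_map_range {m : ℕ} {f g : ℕ → ℝ × ℝ} (hr : r < m)
    (h : ∀ s < m, s ≠ r → g s = f s) :
    Replace1 ((List.range m).map f) ((List.range m).map g) (f r) (g r) := by
  refine ⟨r, by simpa using hr, pt_map_range f hr, by simp, pt_map_range g hr, fun s hs hsr => ?_⟩
  rw [List.length_map, List.length_range] at hs
  rw [pt_map_range f hs, pt_map_range g hs, h s hs hsr]

theorem replace2_map_range {m : ℕ} {f g : ℕ → ℝ × ℝ} (hr : r < m) (hs : s < m) (hrs : r ≠ s)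
    (h : ∀ u < m, u ≠ r → u ≠ s → g u = f u) :
    Replace2 ((List.range m).map f) ((List.range m).map g) (f r) (g r) (f s) (g s) := by
  refine ⟨r, s, by simpa using hr, by simpa using hs, hrs, pt_map_range f hr, pt_map_range f hs,
    by simp, pt_map_range g hr, pt_map_range g hs, fun u hu hur hus => ?_⟩
  rw [List.length_map, List.length_range] at hu
  rw [pt_map_range f hu, pt_map_range g hu, h u hu hur hus]

theorem Replace1.append_right (h : Replace1 p p' a a') (q : List (ℝ × ℝ)) :
    Replace1 (p ++ q) (p' ++ q) a a' := by
  obtain ⟨r, hr, hpr, hl, hpr', hother⟩ := h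
  refine ⟨r, by rw [List.length_append]; lia, by rwa [pt_append_left hr], by simp [hl],
    by rwa [pt_append_left (hl ▸ hr)], fun s _ hsr => ?_⟩
  rcases lt_or_ge s p.length with hsp | hsp
  · rw [pt_append_left (hl ▸ hsp), pt_append_left hsp, hother s hsp hsr]
  · rw [pt_append_right (hl ▸ hsp), pt_append_right hsp, hl]

theorem Replace2.append_right (h : Replace2 p p' a a' b b') (q : List (ℝ × ℝ)) :
    Replace2 (p ++ q) (p' ++ q) a a' b b' := by
  obtain ⟨r, s, hr, hs, hrs, hpr, hps, hl, hpr', hps', hother⟩ := h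
  refine ⟨r, s, by rw [List.length_append]; lia, by rw [List.length_append]; lia, hrs,
    by rwa [pt_append_left hr], by rwa [pt_append_left hs], by simp [hl],
    by rwa [pt_append_left (hl ▸ hr)], by rwa [pt_append_left (hl ▸ hs)], fun u _ hur hus => ?_⟩
  rcases lt_or_ge u p.length with hup | hup
  · rw [pt_append_left (hl ▸ hup), pt_append_left hup, hother u hup hur hus]
  · rw [pt_append_right (hl ▸ hup), pt_append_right hup, hl]

theorem Replace1.reverse (h : Replace1 p p' a a') : Replace1 p.reverse p'.reverse a a' := by
  obtain ⟨r, hr, hpr, hl, hpr', hother⟩ := h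
  refine ⟨p.length - 1 - r, by rw [List.length_reverse]; lia, by rwa [pt_reverse_sub hr],
    by simpa using hl, by rwa [← hl, pt_reverse_sub (hl ▸ hr)], fun s hs hsr => ?_⟩
  rw [List.length_reverse] at hs
  rw [pt_reverse (hl ▸ hs), pt_reverse hs, hl, hother _ (by lia) (by lia)]

theorem Replace2.reverse (h : Replace2 p p' a a' b b') :
    Replace2 p.reverse p'.reverse a a' b b' := by
  obtain ⟨r, s, hr, hs, hrs, hpr, hps, hl, hpr', hps', hother⟩ := h
  refine ⟨p.length - 1 - r, p.length - 1 - s, by rw [List.length_reverse]; lia,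
    by rw [List.length_reverse]; lia, by lia, by rwa [pt_reverse_sub hr],
    by rwa [pt_reverse_sub hs], by simpa using hl,
    by rwa [← hl, pt_reverse_sub (hl ▸ hr)], by rwa [← hl, pt_reverse_sub (hl ▸ hs)],
    fun u hu hur hus => ?_⟩
  rw [List.length_reverse] at hu
  rw [pt_reverse (hl ▸ hu), pt_reverse hu, hl, hother _ (by lia) (by lia) (by lia)]

theorem LoweredTo.exists_pt_eq (h : LoweredTo S i k j l p p') :
    ∃ r < p.length, pt p r = movedFrom S (j, l) ∧ pt p' r = movedTo S (j, l) := by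
  obtain ⟨-, -, -, h⟩ := h
  rcases S with n | ⟨n, ε⟩
  · obtain ⟨r, hr, hpr, -, hpr', -⟩ := h
    exact ⟨r, hr, hpr, hpr'⟩
  · simp only [movedFrom, movedTo]
    simp only at h
    split_ifs at h ⊢
    · obtain ⟨r, hr, hpr, -, hpr', -⟩ := h
      exact ⟨r, hr, hpr, hpr'⟩
    · obtain ⟨r, s, hr, -, -, hpr, -, -, hpr', -⟩ := h
      exact ⟨r, hr, hpr, hpr'⟩
    · obtain ⟨r, hr, hpr, -, hpr', -⟩ := h
      exact ⟨r, hr, hpr, hpr'⟩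

theorem LoweredTo.weaklyAbove (hS : S.valid) (h : LoweredTo S i k j l p p') :
    WeaklyAbove p p' := by
  obtain ⟨-, -, -, h⟩ := h
  rcases S with n | ⟨n, ε⟩
  · exact Replace1.weaklyAbove h (by dsimp only; linarith)
  · obtain ⟨-, h0, h1⟩ := hS
    simp only at h
    split_ifs at h
    · exact h.weaklyAbove (by dsimp only; linarith)
    · exact h.weaklyAbove (by dsimp only; linarith) (by dsimp only; linarith)
    · exact h.weaklyAbove (by dsimp only; linarith)

/-- The sum of the ordinates of the points of a path. As ordinates grow downwards, it measures how
low the path lies; it serves as the termination measure of sequences of lowering moves. -/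
noncomputable def depth (p : List (ℝ × ℝ)) : ℝ :=
  ∑ r ∈ Finset.range p.length, (pt p r).2

theorem WeaklyAbove.depth_le (h : WeaklyAbove p q) : depth p ≤ depth q := by
  rw [depth, depth, ← h.1]
  exact Finset.sum_le_sum fun r hr => h.2 r (Finset.mem_range.1 hr)

theorem LoweredTo.depth_add_one_le (hS : S.valid) (h : LoweredTo S i k j l p p') :
    depth p + 1 ≤ depth p' := by
  have hpp' := h.weaklyAbove hS
  obtain ⟨r, hr, hpr, hpr'⟩ := h.exists_pt_eq
  have hgap : (pt p r).2 + 1 ≤ (pt p' r).2 := by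
    rw [hpr, hpr']; exact movedFrom_snd_add_one_le hS
  have hle : (pt p' r).2 - (pt p r).2 ≤ depth p' - depth p := by
    rw [depth, depth, ← hpp'.1, ← Finset.sum_sub_distrib]
    exact Finset.single_le_sum (f := fun u => (pt p' u).2 - (pt p u).2)
      (fun u hu => sub_nonneg.2 (hpp'.2 u (Finset.mem_range.1 hu))) (Finset.mem_range.2 hr)
  linarith

end Sites

/-! ### Tuples of paths -/

/-- The properties of the set of paths `P S i k` on which the connectedness of the tuples rests: its
paths visit the same columns, each from the bottom to the top if it does so repeatedly, are closed
under `topPath`, and can be lowered step by step to any other one weakly below. -/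
structure IsPathLattice (S : Setting) (i : ℕ) (k : ℤ) : Prop where
  map_fst_eq {p q : List (ℝ × ℝ)} :
    p ∈ P S i k → q ∈ P S i k → p.map Prod.fst = q.map Prod.fst
  snd_lt_snd {p : List (ℝ × ℝ)} {r s : ℕ} : p ∈ P S i k → r < s → s < p.length →
    (pt p r).1 = (pt p s).1 → (pt p s).2 < (pt p r).2
  topPath_mem {p q : List (ℝ × ℝ)} : p ∈ P S i k → q ∈ P S i k → topPath p q ∈ P S i k
  exists_loweredTo {p q : List (ℝ × ℝ)} : q ∈ P S i k → p ∈ P S i k → WeaklyAbove q p → q ≠ p →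
    ∃ q' j l, (j, l) ∈ W S ∧ LoweredTo S i k j l q q' ∧ WeaklyAbove q' p

section Tuples

variable {S : Setting} {T : ℕ} {w : Fin T → ℕ × ℤ} {jl : ℕ × ℤ}
  {ps ps' qs qs' rs : Fin T → List (ℝ × ℝ)} {ms : List (ℕ × ℤ)}

theorem TLoweredTo.weaklyAbove (hS : S.valid) (h : TLoweredTo S w jl qs ps) (t : Fin T) :
    WeaklyAbove (qs t) (ps t) := by
  obtain ⟨u, hu, hother⟩ := h
  by_cases htu : t = u
  · exact htu ▸ hu.weaklyAbove hS
  · exact hother t htu ▸ WeaklyAbove.refl _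

theorem TLoweredTo.sum_depth_add_one_le (hS : S.valid) (h : TLoweredTo S w jl qs ps) :
    ∑ t, depth (qs t) + 1 ≤ ∑ t, depth (ps t) := by
  have hnonneg (t : Fin T) : 0 ≤ depth (ps t) - depth (qs t) :=
    sub_nonneg.2 (h.weaklyAbove hS t).depth_le
  obtain ⟨u, hu, -⟩ := h
  have hle : depth (ps u) - depth (qs u) ≤ ∑ t, depth (ps t) - ∑ t, depth (qs t) := by
    rw [← Finset.sum_sub_distrib]
    exact Finset.single_le_sum (f := fun t => depth (ps t) - depth (qs t))
      (fun t _ => hnonneg t) (Finset.mem_univ u)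
  linarith [hu.depth_add_one_le hS]

theorem TLoweredTo.map_fst_eq (hP : ∀ t, IsPathLattice S (w t).1 (w t).2)
    (h : TLoweredTo S w jl qs ps) (t : Fin T) : (qs t).map Prod.fst = (ps t).map Prod.fst := by
  obtain ⟨u, hu, hother⟩ := h
  by_cases htu : t = u
  · exact htu ▸ (hP u).map_fst_eq hu.1 hu.2.1
  · rw [hother t htu]

-- Lowering the lowest component that differs from its target cannot create an overlap, since the
-- components below it have already reached theirs.
theorem exists_tLoweredTo (hS : S.valid) (hP : ∀ t, IsPathLattice S (w t).1 (w t).2)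
    (hqs : qs ∈ PBar S w) (hps : ps ∈ PBar S w) (habove : ∀ t, WeaklyAbove (qs t) (ps t))
    (hne : qs ≠ ps) :
    ∃ qs' jl, jl ∈ W S ∧ TLoweredTo S w jl qs qs' ∧ qs' ∈ PBar S w ∧
      ∀ t, WeaklyAbove (qs' t) (ps t) := by
  obtain ⟨t, ht, hmax⟩ := (Set.toFinite {t | qs t ≠ ps t}).exists_maximal (Function.ne_iff.1 hne)
  have hbelow (u : Fin T) (htu : t < u) : qs u = ps u :=
    not_not.1 fun hu => (hmax hu htu.le).not_gt htu
  obtain ⟨q', j, l, hjl, hlow, hq'⟩ :=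
    (hP t).exists_loweredTo (hqs.1 t) (hps.1 t) (habove t) ht
  refine ⟨Function.update qs t q', (j, l), hjl, ⟨t, by simpa using hlow, ?_⟩, ⟨?_, ?_⟩, ?_⟩
  · exact fun s hs => Function.update_of_ne hs _ _
  · exact (Function.forall_update_iff qs fun s q => q ∈ P S (w s).1 (w s).2).2
      ⟨hlow.2.1, fun s _ => hqs.1 s⟩
  · intro s u hsu
    by_cases hst : s = t
    · subst hst
      rw [Function.update_self, Function.update_of_ne hsu.ne', hbelow u hsu]
      exact (hps.2 s u hsu).mono_left ((hP s).map_fst_eq hlow.2.1 (hps.1 s)) hq'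
    rw [Function.update_of_ne hst]
    by_cases hut : u = t
    · subst hut
      rw [Function.update_self]
      exact (hqs.2 s u hsu).mono_right ((hP u).map_fst_eq hlow.1 hlow.2.1) (hlow.weaklyAbove hS)
    · rw [Function.update_of_ne hut]
      exact hqs.2 s u hsu
  · exact (Function.forall_update_iff qs fun s q => WeaklyAbove q (ps s)).2
      ⟨hq', fun s _ => habove s⟩

theorem exists_tLowerSeq (hS : S.valid) (hP : ∀ t, IsPathLattice S (w t).1 (w t).2)
    (hqs : qs ∈ PBar S w) (hps : ps ∈ PBar S w) (habove : ∀ t, WeaklyAbove (qs t) (ps t)) :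
    ∃ ms, TLowerSeq S w qs ps ms := by
  obtain ⟨m, hm⟩ := exists_nat_gt (∑ t, depth (ps t) - ∑ t, depth (qs t))
  induction m generalizing qs with
  | zero =>
    have := Finset.sum_le_sum fun t (_ : t ∈ Finset.univ) => (habove t).depth_le
    rw [Nat.cast_zero] at hm
    linarith
  | succ m ih =>
    by_cases hne : qs = ps
    · exact ⟨[], hne ▸ .nil qs⟩
    obtain ⟨qs', jl, hjl, hlow, hqs', habove'⟩ := exists_tLoweredTo hS hP hqs hps habove hne
    have hdepth := hlow.sum_depth_add_one_le hS
    rw [Nat.cast_succ] at hm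
    obtain ⟨ms, hms⟩ := ih hqs' habove' (by linarith)
    exact ⟨jl :: ms, .cons hjl hlow hqs'.2 hms⟩

theorem TLowerSeq.weaklyAbove (hS : S.valid) (h : TLowerSeq S w qs ps ms) (t : Fin T) :
    WeaklyAbove (qs t) (ps t) := by
  induction h with
  | nil ps => exact .refl _
  | cons _ hlow _ _ ih => exact (hlow.weaklyAbove hS t).trans ih

theorem TLowerSeq.toTMoveSeq (h : TLowerSeq S w qs ps ms) :
    TMoveSeq S w qs ps (ms.map (Prod.mk true)) := by
  induction h with
  | nil ps => exact .nil ps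
  | cons hjl hlow hover _ ih => exact .lower hjl hlow hover ih

theorem TMoveSeq.trans {ms ms' : List (Bool × (ℕ × ℤ))} (h : TMoveSeq S w ps qs ms)
    (h' : TMoveSeq S w qs rs ms') : TMoveSeq S w ps rs (ms ++ ms') := by
  induction h with
  | nil ps => exact h'
  | lower hjl hlow hover _ ih => exact .lower hjl hlow hover (ih h')
  | raise hjl hlow hover _ ih => exact .raise hjl hlow hover (ih h')

theorem TLowerSeq.reverse (h : TLowerSeq S w qs ps ms) (hqs : NonOverlapping qs) :
    TMoveSeq S w ps qs (ms.reverse.map (Prod.mk false)) := by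
  induction h with
  | nil ps => exact .nil ps
  | @cons qs qs' ps jl ms hjl hlow hqs' _ ih =>
    rw [List.reverse_cons, List.map_append]
    exact (ih hqs').trans (.raise hjl hlow hqs (.nil qs))

/-- Some point of `qs` in the column of the site `jl` lies at or above the place from which a
lowering move at `jl` starts, while the corresponding point of `ps` lies at or below the place where
such a move ends. -/
def Crossed (S : Setting) {T : ℕ} (qs ps : Fin T → List (ℝ × ℝ)) (jl : ℕ × ℤ) : Prop :=
  ∃ t r, r < (qs t).length ∧ (pt (qs t) r).1 = (movedFrom S jl).1 ∧
    (pt (qs t) r).2 ≤ (movedFrom S jl).2 ∧ (movedTo S jl).2 ≤ (pt (ps t) r).2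

theorem TLowerSeq.crossed (hS : S.valid) (hP : ∀ t, IsPathLattice S (w t).1 (w t).2)
    (h : TLowerSeq S w qs ps ms) (hjl : jl ∈ ms) : Crossed S qs ps jl := by
  induction h with
  | nil ps => simp at hjl
  | @cons qs qs' ps jl' ms _ hlow _ hseq ih =>
    rcases List.mem_cons.1 hjl with rfl | hjl
    · obtain ⟨t, hlow, -⟩ := hlow
      obtain ⟨r, hr, hfrom, hto⟩ := hlow.exists_pt_eq
      have hr' : r < (qs' t).length := (hlow.weaklyAbove hS).1 ▸ hr
      exact ⟨t, r, hr, by rw [hfrom], by rw [hfrom], hto ▸ (hseq.weaklyAbove hS t).2 r hr'⟩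
    · obtain ⟨t, r, hr, hcol, hfrom, hto⟩ := ih hjl
      have habove := hlow.weaklyAbove hS t
      rw [← habove.1] at hr
      exact ⟨t, r, hr, (pt_fst_eq (hlow.map_fst_eq hP t) r).trans hcol,
        (habove.2 r hr).trans hfrom, hto⟩

theorem topPath_mem_PBar (hP : ∀ t, IsPathLattice S (w t).1 (w t).2) (hps : ps ∈ PBar S w)
    (hps' : ps' ∈ PBar S w) : (fun t => topPath (ps t) (ps' t)) ∈ PBar S w :=
  ⟨fun t => (hP t).topPath_mem (hps.1 t) (hps'.1 t), fun s t hst =>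
    (hps.2 s t hst).topPath (hps'.2 s t hst) ((hP s).map_fst_eq (hps.1 s) (hps'.1 s))
      ((hP t).map_fst_eq (hps.1 t) (hps'.1 t))⟩

theorem snd_lt_snd_of_mem_PBar (hP : ∀ t, IsPathLattice S (w t).1 (w t).2)
    (hps : ps ∈ PBar S w) {t u : Fin T} {r s : ℕ} (hr : r < (ps t).length)
    (hs : s < (ps u).length) (hcol : (pt (ps t) r).1 = (pt (ps u) s).1)
    (hlt : t < u ∨ t = u ∧ s < r) : (pt (ps t) r).2 < (pt (ps u) s).2 := by
  rcases hlt with htu | ⟨rfl, hsr⟩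
  · exact hps.2 t u htu _ (pt_mem hr) _ (pt_mem hs) hcol
  · exact (hP t).snd_lt_snd (hps.1 t) hsr hr hcol.symm

-- Two points of a tuple in the same column lie in the same order in every other tuple. So if `jl`
-- were crossed on the way down to both `ps` and `ps'`, then one and the same point of the top
-- tuple would lie below `jl` in both of them, hence in the top tuple as well.
theorem not_crossed_topPath_both (hS : S.valid) (hP : ∀ t, IsPathLattice S (w t).1 (w t).2)
    (hps : ps ∈ PBar S w) (hps' : ps' ∈ PBar S w)
    (hcross : Crossed S (fun t => topPath (ps t) (ps' t)) ps jl)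
    (hcross' : Crossed S (fun t => topPath (ps t) (ps' t)) ps' jl) : False := by
  have hmap (t : Fin T) := (hP t).map_fst_eq (hps.1 t) (hps'.1 t)
  have hlen (t : Fin T) := length_eq_of_map_fst_eq (hmap t)
  have hgap := movedFrom_snd_add_one_le (jl := jl) hS
  obtain ⟨t, r, hr, hcol, hfrom, hto⟩ := hcross
  obtain ⟨u, s, hs, hcol', hfrom', hto'⟩ := hcross'
  rw [length_topPath (hlen _)] at hr hs
  rw [pt_topPath (hlen _) hr] at hcol hfrom
  rw [pt_topPath (hlen _) hs] at hcol' hfrom'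
  have hcols : (pt (ps t) r).1 = (pt (ps u) s).1 := hcol.trans hcol'.symm
  have horder : (t = u ∧ r = s) ∨ (t < u ∨ t = u ∧ s < r) ∨ (u < t ∨ u = t ∧ r < s) := by
    lia
  rcases horder with ⟨rfl, rfl⟩ | hlt | hlt
  · rcases min_le_iff.1 hfrom with h | h <;> linarith
  · have h := snd_lt_snd_of_mem_PBar hP hps hr hs hcols hlt
    rcases min_le_iff.1 hfrom' with h' | h' <;> linarith
  · rw [hlen t] at hr
    rw [hlen u] at hs
    rw [pt_fst_eq (hmap t), pt_fst_eq (hmap u)] at hcols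
    have h := snd_lt_snd_of_mem_PBar hP hps' hs hr hcols.symm hlt
    rcases min_le_iff.1 hfrom with h' | h' <;> linarith

theorem exists_tMoveSeq_of_isPathLattice (hS : S.valid)
    (hP : ∀ t, IsPathLattice S (w t).1 (w t).2) (hps : ps ∈ PBar S w) (hps' : ps' ∈ PBar S w) :
    ∃ ms : List (Bool × (ℕ × ℤ)), TMoveSeq S w ps' ps ms ∧
      ∀ jl : ℕ × ℤ, ¬((true, jl) ∈ ms ∧ (false, jl) ∈ ms) := by
  have hlen (t : Fin T) := length_eq_of_map_fst_eq ((hP t).map_fst_eq (hps.1 t) (hps'.1 t))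
  have htop := topPath_mem_PBar hP hps hps'
  obtain ⟨ms, hms⟩ := exists_tLowerSeq hS hP htop hps fun t => topPath_weaklyAbove_left (hlen t)
  obtain ⟨ms', hms'⟩ :=
    exists_tLowerSeq hS hP htop hps' fun t => topPath_weaklyAbove_right (hlen t)
  refine ⟨_, (hms'.reverse htop.2).trans hms.toTMoveSeq, fun jl ⟨hlower, hraise⟩ => ?_⟩
  have hjl : jl ∈ ms := by simpa using hlower
  have hjl' : jl ∈ ms' := by simpa using hraise
  exact not_crossed_topPath_both hS hP hps hps' (hms.crossed hS hP hjl) (hms'.crossed hS hP hjl')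

end Tuples

section Zigzag

/-- The integer sequence `z` goes up or down by `d` at each of its first `m` steps. -/
def IsZigzag (d : ℤ) (m : ℕ) (z : ℕ → ℤ) : Prop :=
  ∀ r < m, z (r + 1) = z r + d ∨ z (r + 1) = z r - d

/-- The entry of index `j ≠ 0` of the zigzag `z` of `m` steps lies below its neighbours, or below
its only neighbour if `j = m`. Valleys are the places where `fillValley` yields a zigzag again; as
ordinates of paths grow downwards, they correspond to upper corners of paths. -/
structure IsValley (d : ℤ) (m : ℕ) (z : ℕ → ℤ) (j : ℕ) : Prop where
  pos : 0 < j
  le : j ≤ m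
  pred_eq : z (j - 1) = z j + d
  succ_eq : j < m → z (j + 1) = z j + d

/-- The sequence obtained from `z` by replacing its entry of index `j`, meant to be a valley, by its
mirror image in the neighbouring values. -/
def fillValley (d : ℤ) (z : ℕ → ℤ) (j : ℕ) : ℕ → ℤ :=
  Function.update z j (z j + 2 * d)

variable {d : ℤ} {m j r : ℕ} {y z : ℕ → ℤ}

theorem fillValley_self : fillValley d z j j = z j + 2 * d :=
  Function.update_self _ _ _

theorem fillValley_of_ne (h : r ≠ j) : fillValley d z j r = z r :=
  Function.update_of_ne h _ _

theorem le_fillValley (hd : 0 ≤ d) (r : ℕ) : z r ≤ fillValley d z j r := by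
  by_cases h : r = j
  · rw [h, fillValley_self]; lia
  · rw [fillValley_of_ne h]

theorem IsValley.isZigzag_fillValley (hv : IsValley d m z j) (hz : IsZigzag d m z) :
    IsZigzag d m (fillValley d z j) := by
  intro r hr
  have hstep := hz r hr
  obtain ⟨hpos, -, hpred, hsucc⟩ := hv
  rcases eq_or_ne r j with rfl | hrj
  · rw [fillValley_self, fillValley_of_ne (by lia), hsucc hr]; lia
  rcases eq_or_ne (r + 1) j with rfl | hrj'
  · rw [fillValley_self, fillValley_of_ne hrj, ← Nat.add_sub_cancel r 1, hpred]; lia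
  · rwa [fillValley_of_ne hrj, fillValley_of_ne hrj']

theorem IsZigzag.two_mul_dvd_sub (hz : IsZigzag d m z) (hr : r ≤ m) :
    2 * d ∣ z r - z 0 - r * d := by
  induction r with
  | zero => simp
  | succ r ih =>
    obtain ⟨c, hc⟩ := ih (by lia)
    rcases hz r hr with h | h
    · exact ⟨c, by push_cast; rw [h]; linear_combination hc⟩
    · exact ⟨c - 1, by push_cast; rw [h]; linear_combination hc⟩

theorem IsZigzag.two_mul_dvd_sub_of_zero_eq (hz : IsZigzag d m z) (hy : IsZigzag d m y)
    (h0 : z 0 = y 0) (hr : r ≤ m) : 2 * d ∣ y r - z r := by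
  have h := (hy.two_mul_dvd_sub hr).sub (hz.two_mul_dvd_sub hr)
  rwa [h0, sub_sub_sub_cancel_right, sub_sub_sub_cancel_right] at h

theorem add_le_of_two_mul_dvd_sub (hdvd : 2 * d ∣ y r - z r) (h : z r < y r) :
    z r + 2 * d ≤ y r := by
  have := Int.le_of_dvd (sub_pos.2 h) hdvd
  lia

-- By the parity of their difference, two zigzags with the same start cannot pass through each other
-- between two consecutive indices.
theorem IsZigzag.le_or_le (hd : 0 ≤ d) (hz : IsZigzag d m z) (hy : IsZigzag d m y)
    (h0 : z 0 = y 0) (hr : r < m) :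
    (z r ≤ y r ∧ z (r + 1) ≤ y (r + 1)) ∨ (y r ≤ z r ∧ y (r + 1) ≤ z (r + 1)) := by
  have hdvd := hz.two_mul_dvd_sub_of_zero_eq hy h0 hr.le
  have hdvd' : 2 * d ∣ z r - y r := dvd_sub_comm.1 hdvd
  have hlt := fun h => add_le_of_two_mul_dvd_sub hdvd h
  have hlt' := fun h => add_le_of_two_mul_dvd_sub hdvd' h
  rcases hz r hr with h | h <;> rcases hy r hr with h' | h' <;> lia

theorem IsZigzag.min (hd : 0 ≤ d) (hz : IsZigzag d m z) (hy : IsZigzag d m y)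
    (h0 : z 0 = y 0) : IsZigzag d m fun r => min (z r) (y r) := by
  intro r hr
  rcases hz.le_or_le hd hy h0 hr with ⟨h, h'⟩ | ⟨h, h'⟩
  · simpa only [min_eq_left h, min_eq_left h'] using hz r hr
  · simpa only [min_eq_right h, min_eq_right h'] using hy r hr

-- A least entry of `z` among those where `z` and `y` differ is a valley: a lesser neighbour would
-- belong to both sequences, and in a single step `y` cannot climb from there past `z`.
theorem IsZigzag.exists_isValley (hd : 0 < d) (hz : IsZigzag d m z) (hy : IsZigzag d m y)
    (h0 : z 0 = y 0) (hle : ∀ r ≤ m, z r ≤ y r) (hr : r ≤ m) (hne : z r ≠ y r) :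
    ∃ j, IsValley d m z j ∧ z j + 2 * d ≤ y j := by
  obtain ⟨j, hj, hmin⟩ := Finset.exists_min_image {s ∈ Finset.range (m + 1) | z s ≠ y s} z
    ⟨r, by simpa [Nat.lt_succ_iff] using ⟨hr, hne⟩⟩
  simp only [Finset.mem_filter, Finset.mem_range, Nat.lt_succ_iff] at hj hmin
  obtain ⟨hjm, hjne⟩ := hj
  have hgap : z j + 2 * d ≤ y j := add_le_of_two_mul_dvd_sub
    (hz.two_mul_dvd_sub_of_zero_eq hy h0 hjm) ((hle j hjm).lt_of_ne hjne)
  have hhigher (s : ℕ) (hs : s ≤ m) (h : z s ≠ y s) : ¬ z s < z j := not_lt.2 (hmin s ⟨hs, h⟩)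
  have hpos : 0 < j := Nat.pos_of_ne_zero fun h => hjne (h ▸ h0)
  refine ⟨j, ⟨hpos, hjm, ?_, fun hlt => ?_⟩, hgap⟩
  · have hz' := hz (j - 1) (by lia)
    have hy' := hy (j - 1) (by lia)
    rw [Nat.sub_add_cancel hpos] at hz' hy'
    have := hhigher (j - 1) (by lia)
    lia
  · have := hhigher (j + 1) hlt
    rcases hz j hlt with h | h <;> rcases hy j hlt with h' | h' <;> lia

theorem fillValley_le (hle : ∀ r ≤ m, z r ≤ y r) (hj : z j + 2 * d ≤ y j) (hr : r ≤ m) :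
    fillValley d z j r ≤ y r := by
  by_cases h : r = j
  · rwa [h, fillValley_self]
  · rw [fillValley_of_ne h]
    exact hle r hr

theorem IsZigzag.update_succ (hz : IsZigzag d m z) {c : ℤ} (hc : c = z m + d ∨ c = z m - d) :
    IsZigzag d (m + 1) (Function.update z (m + 1) c) := by
  intro r hr
  rw [Function.update_of_ne hr.ne]
  rcases (Nat.le_of_lt_succ hr).lt_or_eq with hrm | rfl
  · rw [Function.update_of_ne (by lia)]
    exact hz r hrm
  · rwa [Function.update_self]

theorem exists_isZigzag {x : ℕ → ℝ} (a : ℤ) (h0 : x 0 = a)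
    (hx : ∀ r < m, x (r + 1) - x r = d ∨ x (r + 1) - x r = -d) :
    ∃ z, IsZigzag d m z ∧ z 0 = a ∧ ∀ r ≤ m, x r = z r := by
  have hint (r : ℕ) (hr : r ≤ m) : x r = ⌊x r⌋ := by
    suffices ∃ c : ℤ, x r = c by obtain ⟨c, hc⟩ := this; rw [hc, Int.floor_intCast]
    induction r with
    | zero => exact ⟨a, h0⟩
    | succ r ih =>
      obtain ⟨c, hc⟩ := ih (by lia)
      rcases hx r hr with h | h
      · exact ⟨c + d, by push_cast; linarith⟩
      · exact ⟨c - d, by push_cast; linarith⟩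
  refine ⟨fun r => ⌊x r⌋, fun r hr => ?_, by simp [h0], hint⟩
  have h := hx r hr
  rw [hint r hr.le, hint (r + 1) hr] at h
  refine h.imp (fun h => ?_) fun h => ?_
  · exact_mod_cast (by linarith : (⌊x (r + 1)⌋ : ℝ) = ⌊x r⌋ + d)
  · exact_mod_cast (by linarith : (⌊x (r + 1)⌋ : ℝ) = ⌊x r⌋ - d)

end Zigzag

/-! ### Type A -/

section TypeA

variable {n i j : ℕ} {k : ℤ} {y z : ℕ → ℤ}

/-- The path of type `A_n` with ordinates `z 0, …, z (n + 1)`. -/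
def pathA (n : ℕ) (z : ℕ → ℤ) : List (ℝ × ℝ) :=
  (List.range (n + 2)).map fun r : ℕ => ((r : ℝ), (z r : ℝ))

theorem length_pathA : (pathA n z).length = n + 2 := by
  simp [pathA]

theorem pt_pathA {r : ℕ} (h : r ≤ n + 1) : pt (pathA n z) r = ((r : ℝ), (z r : ℝ)) :=
  pt_map_range _ (Nat.lt_succ_of_le h)

theorem mem_pathsA_iff {p : List (ℝ × ℝ)} :
    p ∈ pathsA n i k ↔ ∃ z, IsZigzag 1 (n + 1) z ∧ z 0 = i + k ∧ z (n + 1) = n + 1 - i + k ∧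
      p = pathA n z := by
  constructor
  · rintro ⟨hlen, hfst, hstart, hend, hstep⟩
    obtain ⟨z, hz, hz0, hpz⟩ := exists_isZigzag (d := 1) (m := n + 1)
      (x := fun r => (pt p r).2) (i + k) (by simpa using hstart)
      fun r hr => by simpa using hstep r (Nat.le_of_lt_succ hr)
    have hend' : (z (n + 1) : ℝ) = n + 1 - i + k := (hpz (n + 1) le_rfl).symm.trans hend
    refine ⟨z, hz, hz0, by exact_mod_cast hend', eq_map_range hlen fun r hr => ?_⟩
    exact Prod.ext (hfst r hr) (hpz r (Nat.le_of_lt_succ hr))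
  · rintro ⟨z, hz, hstart, hend, rfl⟩
    refine ⟨length_pathA, fun r hr => ?_, ?_, ?_, fun r hr => ?_⟩
    · rw [pt_pathA (Nat.le_of_lt_succ hr)]
    · rw [pt_pathA (Nat.zero_le _), hstart]; push_cast; rfl
    · rw [pt_pathA le_rfl, hend]; push_cast; rfl
    · rw [pt_pathA (by lia), pt_pathA (by lia)]
      rcases hz r (by lia) with h | h <;> simp [h]

theorem weaklyAbove_pathA : WeaklyAbove (pathA n z) (pathA n y) ↔ ∀ r ≤ n + 1, z r ≤ y r := by
  simp [pathA, weaklyAbove_map_range, Nat.lt_succ_iff]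

theorem topPath_pathA :
    topPath (pathA n z) (pathA n y) = pathA n fun r => min (z r) (y r) := by
  simp [pathA, topPath_map_range]

theorem mem_XA_of_isZigzag (h : (i, k) ∈ XA n) (hz : IsZigzag 1 (n + 1) z) (hz0 : z 0 = i + k)
    (hpos : 0 < j) (hj : j ≤ n) : (j, z j) ∈ XA n := by
  obtain ⟨-, -, hik⟩ := h
  have := hz.two_mul_dvd_sub (r := j) (by lia)
  exact ⟨hpos, hj, by lia⟩

theorem IsValley.canLower_pathA (hv : IsValley 1 (n + 1) z j) (hj : j ≤ n) :
    CanLower (.A n) (pathA n z) j (z j + 1) := by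
  obtain ⟨hpos, -, hpred, hsucc⟩ := hv
  constructor
  · refine ⟨hpos, hj, ?_, ?_, ?_⟩
    · rw [pt_pathA (by lia)]
      simp [rr]
    · rw [pt_pathA (by lia), hpred]
      simp [rr]
    · rw [pt_pathA (by lia), hsucc (by lia)]
      simp [rr]
  · rintro ⟨-, -, h, -⟩
    rw [pt_pathA (by lia)] at h
    have hsnd : (z j : ℝ) = z j + 1 + 1 := by simpa [rr] using congrArg Prod.snd h
    linarith

theorem replace1_pathA_fillValley (hj : j ≤ n) :
    Replace1 (pathA n z) (pathA n (fillValley 1 z j)) (j, z j) (j, z j + 2) := by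
  have h := replace1_map_range (m := n + 2) (r := j) (f := fun r : ℕ => ((r : ℝ), (z r : ℝ)))
    (g := fun r : ℕ => ((r : ℝ), (fillValley 1 z j r : ℝ))) (by lia)
    fun s _ hs => by rw [fillValley_of_ne hs]
  simpa [pathA, fillValley_self] using h

theorem isPathLattice_A (h : (i, k) ∈ X (.A n)) : IsPathLattice (.A n) i k where
  map_fst_eq hp hq := by
    obtain ⟨z, -, -, -, rfl⟩ := mem_pathsA_iff.1 hp
    obtain ⟨y, -, -, -, rfl⟩ := mem_pathsA_iff.1 hq
    simp [pathA]
  snd_lt_snd hp hrs hs hcol := by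
    obtain ⟨z, -, -, -, rfl⟩ := mem_pathsA_iff.1 hp
    rw [length_pathA] at hs
    rw [pt_pathA (by lia), pt_pathA (by lia)] at hcol
    exact absurd (Nat.cast_injective hcol) hrs.ne
  topPath_mem hp hq := by
    obtain ⟨z, hz, hz0, hzn, rfl⟩ := mem_pathsA_iff.1 hp
    obtain ⟨y, hy, hy0, hyn, rfl⟩ := mem_pathsA_iff.1 hq
    refine mem_pathsA_iff.2 ⟨_, hz.min zero_le_one hy (hz0.trans hy0.symm), ?_, ?_, topPath_pathA⟩
    · simp only [hz0, hy0, min_self]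
    · simp only [hzn, hyn, min_self]
  exists_loweredTo {p q} hq hp hqp hne := by
    obtain ⟨z, hz, hz0, hzn, rfl⟩ := mem_pathsA_iff.1 hq
    obtain ⟨y, hy, hy0, hyn, rfl⟩ := mem_pathsA_iff.1 hp
    rw [weaklyAbove_pathA] at hqp
    obtain ⟨r, hr, hzy⟩ : ∃ r ≤ n + 1, z r ≠ y r := by
      contrapose! hne
      exact List.map_congr_left fun r hr => by rw [hne r (by simpa [Nat.lt_succ_iff] using hr)]
    obtain ⟨j, hv, hj⟩ := hz.exists_isValley one_pos hy (hz0.trans hy0.symm) hqp hr hzy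
    have hjn : j ≤ n := by
      refine Nat.le_of_lt_succ (hv.le.lt_of_ne fun h => ?_)
      rw [h] at hj
      lia
    have hfill : pathA n (fillValley 1 z j) ∈ pathsA n i k :=
      mem_pathsA_iff.2 ⟨_, hv.isZigzag_fillValley hz, by rwa [fillValley_of_ne hv.pos.ne],
        by rwa [fillValley_of_ne (by lia)], rfl⟩
    refine ⟨pathA n (fillValley 1 z j), j, z j + 1, ?_, ⟨hq, hfill, hv.canLower_pathA hjn, ?_⟩,
      weaklyAbove_pathA.2 fun r hr => fillValley_le hqp hj hr⟩
    · simpa [W, rr, X] using mem_XA_of_isZigzag h hz hz0 hv.pos hjn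
    · convert replace1_pathA_fillValley hjn using 2 <;> push_cast <;> ring

end TypeA

/-! ### Type B -/

section SpinPaths

variable {n j r s : ℕ} {ε : ℝ} {l l' : ℤ} {y z : ℕ → ℤ}

/-- The integer sequences coding the paths of `pathsBspin n ε l`: the last step, of length `1 + ε`
in the path, is recorded as a step of length `2` in the same direction. -/
structure IsSpinZigzag (n : ℕ) (l : ℤ) (z : ℕ → ℤ) : Prop where
  isZigzag : IsZigzag 2 n z
  zero_eq : z 0 = l + 2 * n - 1

/-- The ordinate of index `r ≤ n` of the path coded by `z`; for `r = n` it is obtained from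
`z (n - 1)` and `z n = z (n - 1) ± 2` by shortening the last step to `1 + ε`. -/
noncomputable def spinHeight (ε : ℝ) (n : ℕ) (z : ℕ → ℤ) (r : ℕ) : ℝ :=
  if r < n then z r else ((1 - ε) * z (n - 1) + (1 + ε) * z n) / 2

/-- The abscissa of index `r ≤ n` of the paths of `pathsBspin n ε l`. -/
def spinColumn (n : ℕ) (l : ℤ) (r : ℕ) : ℤ :=
  if r = n then 2 * n - 1 else if l % 4 = 3 then 2 * r else 4 * n - 2 - 2 * r

/-- The path of `pathsBspin n ε l` coded by `z`. -/
noncomputable def spinPath (ε : ℝ) (n : ℕ) (l : ℤ) (z : ℕ → ℤ) : List (ℝ × ℝ) :=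
  (List.range (n + 1)).map fun r : ℕ => ((spinColumn n l r : ℝ), spinHeight ε n z r)

theorem spinColumn_self : spinColumn n l n = 2 * n - 1 :=
  if_pos rfl

theorem cast_spinColumn_self : (spinColumn n l n : ℝ) = 2 * n - 1 := by
  rw [spinColumn_self]
  push_cast
  rfl

theorem spinColumn_injective : Function.Injective (spinColumn n l) := by
  intro r s h
  unfold spinColumn at h
  split_ifs at h <;> lia

theorem eq_and_eq_of_spinColumn_eq (hll' : l % 4 = 3 ↔ l' % 4 ≠ 3) (hr : r ≤ n) (hs : s ≤ n)
    (h : spinColumn n l r = spinColumn n l' s) : r = n ∧ s = n := by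
  unfold spinColumn at h
  split_ifs at h <;> lia

theorem spinHeight_of_lt (h : r < n) : spinHeight ε n z r = z r :=
  if_pos h

theorem spinHeight_self :
    spinHeight ε n z n = ((1 - ε) * z (n - 1) + (1 + ε) * z n) / 2 :=
  if_neg (lt_irrefl n)

theorem spinHeight_eq_add {c : ℤ} (h : z n = z (n - 1) + 2 * c) :
    spinHeight ε n z n = z (n - 1) + (1 + ε) * c := by
  rw [spinHeight_self, h]
  push_cast
  ring

theorem spinHeight_self_mono (hε : ε ∈ Set.Ioo 0 1) (hpred : z (n - 1) ≤ y (n - 1))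
    (hlast : z n ≤ y n) : spinHeight ε n z n ≤ spinHeight ε n y n := by
  have hpred' : (z (n - 1) : ℝ) ≤ y (n - 1) := by exact_mod_cast hpred
  have hlast' : (z n : ℝ) ≤ y n := by exact_mod_cast hlast
  rw [spinHeight_self, spinHeight_self]
  linarith [mul_le_mul_of_nonneg_left hpred' (sub_nonneg.2 hε.2.le),
    mul_le_mul_of_nonneg_left hlast' (add_pos one_pos hε.1).le]

theorem spinHeight_mono (hε : ε ∈ Set.Ioo 0 1) (h : ∀ r ≤ n, z r ≤ y r) (hr : r ≤ n) :
    spinHeight ε n z r ≤ spinHeight ε n y r := by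
  rcases hr.lt_or_eq with hr' | rfl
  · rw [spinHeight_of_lt hr', spinHeight_of_lt hr']
    exact_mod_cast h r hr
  · exact spinHeight_self_mono hε (h (r - 1) (Nat.sub_le r 1)) (h r le_rfl)

theorem spinHeight_congr (h : ∀ r ≤ n, z r = y r) (hr : r ≤ n) :
    spinHeight ε n z r = spinHeight ε n y r := by
  rw [spinHeight, spinHeight, h r hr, h n le_rfl, h (n - 1) (Nat.sub_le n 1)]

theorem IsSpinZigzag.four_dvd (hz : IsSpinZigzag n l z) (hr : r ≤ n) :
    4 ∣ z r - (l + 2 * n - 1) - 2 * r := by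
  have h := hz.isZigzag.two_mul_dvd_sub hr
  rw [hz.zero_eq] at h
  lia

theorem IsSpinZigzag.min (hz : IsSpinZigzag n l z) (hy : IsSpinZigzag n l y) :
    IsSpinZigzag n l fun r => min (z r) (y r) :=
  ⟨hz.isZigzag.min zero_le_two hy.isZigzag (hz.zero_eq.trans hy.zero_eq.symm), by
    simp only [hz.zero_eq, hy.zero_eq, min_self]⟩

theorem IsValley.isSpinZigzag_fillValley (hv : IsValley 2 n z j) (hz : IsSpinZigzag n l z) :
    IsSpinZigzag n l (fillValley 2 z j) :=
  ⟨hv.isZigzag_fillValley hz.isZigzag, by rw [fillValley_of_ne hv.pos.ne, hz.zero_eq]⟩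

theorem IsSpinZigzag.last_le_or_le (hn : 0 < n) (hz : IsSpinZigzag n l z)
    (hy : IsSpinZigzag n l y) :
    (z (n - 1) ≤ y (n - 1) ∧ z n ≤ y n) ∨ (y (n - 1) ≤ z (n - 1) ∧ y n ≤ z n) := by
  have h := hz.isZigzag.le_or_le zero_le_two hy.isZigzag (hz.zero_eq.trans hy.zero_eq.symm)
    (Nat.sub_one_lt_of_lt hn)
  rwa [Nat.sub_add_cancel hn] at h

theorem IsSpinZigzag.le_of_spinHeight_le (hn : 0 < n) (hε : ε ∈ Set.Ioo 0 1)
    (hz : IsSpinZigzag n l z) (hy : IsSpinZigzag n l y)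
    (h : ∀ r ≤ n, spinHeight ε n z r ≤ spinHeight ε n y r) (hr : r ≤ n) : z r ≤ y r := by
  have hlt (s : ℕ) (hs : s < n) : z s ≤ y s := by
    have := h s hs.le
    rw [spinHeight_of_lt hs, spinHeight_of_lt hs] at this
    exact_mod_cast this
  rcases hr.lt_or_eq with hr' | rfl
  · exact hlt r hr'
  rcases hz.last_le_or_le hn hy with ⟨-, hle⟩ | ⟨hpred, -⟩
  · exact hle
  have hlast := h r le_rfl
  rw [spinHeight_self, spinHeight_self, (hlt (r - 1) (Nat.sub_one_lt_of_lt hn)).antisymm hpred]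
    at hlast
  have : (z r : ℝ) ≤ y r :=
    le_of_mul_le_mul_left (by linarith) (add_pos one_pos hε.1)
  exact_mod_cast this

theorem spinHeight_min (hn : 0 < n) (hε : ε ∈ Set.Ioo 0 1) (hz : IsSpinZigzag n l z)
    (hy : IsSpinZigzag n l y) (r : ℕ) :
    spinHeight ε n (fun r => min (z r) (y r)) r =
      min (spinHeight ε n z r) (spinHeight ε n y r) := by
  by_cases hr : r < n
  · simp only [spinHeight_of_lt hr, Int.cast_min]
  have heval (x : ℕ → ℤ) : spinHeight ε n x r = spinHeight ε n x n := by
    rw [spinHeight_self, spinHeight, if_neg hr]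
  simp only [heval]
  rcases hz.last_le_or_le hn hy with ⟨hpred, hlast⟩ | ⟨hpred, hlast⟩
  · rw [min_eq_left (spinHeight_self_mono hε hpred hlast)]
    simp only [spinHeight_self, min_eq_left hpred, min_eq_left hlast]
  · rw [min_eq_right (spinHeight_self_mono hε hpred hlast)]
    simp only [spinHeight_self, min_eq_right hpred, min_eq_right hlast]

theorem length_spinPath : (spinPath ε n l z).length = n + 1 := by
  simp [spinPath]

theorem pt_spinPath (h : r ≤ n) :
    pt (spinPath ε n l z) r = ((spinColumn n l r : ℝ), spinHeight ε n z r) :=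
  pt_map_range _ (Nat.lt_succ_of_le h)

theorem mem_spinPath {a : ℝ × ℝ} :
    a ∈ spinPath ε n l z ↔ ∃ r ≤ n, ((spinColumn n l r : ℝ), spinHeight ε n z r) = a := by
  simp [spinPath]

theorem snd_eq_of_mem_spinPath {a : ℝ × ℝ} (ha : a ∈ spinPath ε n l z)
    (hcol : a.1 = spinColumn n l r) : a.2 = spinHeight ε n z r := by
  obtain ⟨s, -, rfl⟩ := mem_spinPath.1 ha
  rw [spinColumn_injective (Int.cast_injective hcol)]

theorem fst_ne_of_mem_spinPath (hll' : l % 4 = 3 ↔ l' % 4 ≠ 3) (hr : r < n) {a : ℝ × ℝ}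
    (ha : a ∈ spinPath ε n l' z) : a.1 ≠ spinColumn n l r := by
  obtain ⟨s, hs, rfl⟩ := mem_spinPath.1 ha
  exact fun h => hr.ne (eq_and_eq_of_spinColumn_eq hll' hr.le hs (Int.cast_injective h).symm).1

theorem map_fst_spinPath : (spinPath ε n l z).map Prod.fst = (spinPath ε n l y).map Prod.fst := by
  simp [spinPath]

theorem spinPath_congr (h : ∀ r ≤ n, z r = y r) : spinPath ε n l z = spinPath ε n l y :=
  List.map_congr_left fun r hr => by
    rw [spinHeight_congr h (by simpa [Nat.lt_succ_iff] using hr)]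

theorem weaklyAbove_spinPath (hn : 0 < n) (hε : ε ∈ Set.Ioo 0 1) (hz : IsSpinZigzag n l z)
    (hy : IsSpinZigzag n l y) :
    WeaklyAbove (spinPath ε n l z) (spinPath ε n l y) ↔ ∀ r ≤ n, z r ≤ y r := by
  simp only [spinPath, weaklyAbove_map_range, Nat.lt_succ_iff]
  exact ⟨fun h r => hz.le_of_spinHeight_le hn hε hy h, fun h r => spinHeight_mono hε h⟩

theorem topPath_spinPath (hn : 0 < n) (hε : ε ∈ Set.Ioo 0 1) (hz : IsSpinZigzag n l z)
    (hy : IsSpinZigzag n l y) :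
    topPath (spinPath ε n l z) (spinPath ε n l y) =
      spinPath ε n l fun r => min (z r) (y r) := by
  simp only [spinPath, topPath_map_range, spinHeight_min hn hε hz hy]

theorem forall_eq_spinColumn_iff {x : ℕ → ℝ} :
    (∀ r ≤ n, x r = spinColumn n l r) ↔
      (if l % 4 = 3 then ∀ r < n, x r = 2 * r else ∀ r < n, x r = 4 * n - 2 - 2 * r) ∧
        x n = 2 * n - 1 := by
  have hlast : x n = spinColumn n l n ↔ x n = 2 * n - 1 := by
    rw [cast_spinColumn_self]
  have hlt (r : ℕ) (hr : r < n) :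
      (spinColumn n l r : ℝ) = if l % 4 = 3 then (2 * r : ℝ) else 4 * n - 2 - 2 * r := by
    rw [spinColumn, if_neg hr.ne]
    split_ifs <;> push_cast <;> rfl
  rw [← hlast]
  have hsplit : (∀ r ≤ n, x r = spinColumn n l r) ↔
      (∀ r < n, x r = spinColumn n l r) ∧ x n = spinColumn n l n := by
    simp only [← Nat.lt_succ_iff, Nat.forall_lt_succ_right]
  rw [hsplit]
  refine and_congr_left' ?_
  split_ifs with hl <;> simp +contextual only [hlt, hl, if_true, if_false]

theorem spinPath_mem_pathsBspin (hn : 0 < n) (hz : IsSpinZigzag n l z) :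
    spinPath ε n l z ∈ pathsBspin n ε l := by
  have hcol := forall_eq_spinColumn_iff.1 fun r hr =>
    congrArg Prod.fst (pt_spinPath (ε := ε) (z := z) (l := l) (n := n) hr)
  refine ⟨length_spinPath, hcol.1, hcol.2, ?_, fun r hr => ?_, ?_⟩
  · rw [pt_spinPath hn.le, spinHeight_of_lt hn, hz.zero_eq]
    push_cast
    rfl
  · rw [pt_spinPath (by lia), pt_spinPath (by lia), spinHeight_of_lt hr,
      spinHeight_of_lt (Nat.lt_of_succ_lt hr)]
    rcases hz.isZigzag r (by lia) with h | h <;> simp [h]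
  · have hlast := hz.isZigzag (n - 1) (by lia)
    rw [Nat.sub_add_cancel hn] at hlast
    rw [pt_spinPath le_rfl, pt_spinPath (Nat.sub_le n 1),
      spinHeight_of_lt (Nat.sub_one_lt_of_lt hn)]
    rcases hlast with h | h
    · rw [spinHeight_eq_add (c := 1) h]; simp
    · rw [spinHeight_eq_add (c := -1) (by lia)]; simp

theorem exists_eq_spinPath_of_mem_pathsBspin (hn : 0 < n) {p : List (ℝ × ℝ)}
    (h : p ∈ pathsBspin n ε l) : ∃ z, IsSpinZigzag n l z ∧ p = spinPath ε n l z := by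
  obtain ⟨m, rfl⟩ := Nat.exists_eq_add_one.2 hn
  obtain ⟨hlen, hcol, hmid, hstart, hstep, hlast⟩ := h
  rw [Nat.add_sub_cancel] at hlast
  obtain ⟨x, hx, hx0, hpx⟩ := exists_isZigzag (d := 2) (m := m) (x := fun r => (pt p r).2)
    (l + 2 * (m + 1) - 1) (by simpa using hstart)
    fun r hr => by simpa using hstep r (by lia)
  obtain ⟨c, hc, hpc⟩ : ∃ c : ℤ, (c = 1 ∨ c = -1) ∧
      (pt p (m + 1)).2 = (pt p m).2 + (1 + ε) * c := by
    rcases hlast with h | h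
    · exact ⟨1, .inl rfl, by push_cast; linear_combination h⟩
    · exact ⟨-1, .inr rfl, by push_cast; linear_combination h⟩
  set z := Function.update x (m + 1) (x m + 2 * c) with hz
  have hzx (r : ℕ) (hr : r ≤ m) : z r = x r := Function.update_of_ne (by lia) _ _
  have hzlast : z (m + 1) = z m + 2 * c := by rw [hzx m le_rfl, hz, Function.update_self]
  refine ⟨z, ⟨hx.update_succ (by lia), ?_⟩, eq_map_range hlen fun r hr => Prod.ext ?_ ?_⟩
  · rw [hzx 0 (Nat.zero_le m), hx0]
    push_cast
    rfl
  · exact forall_eq_spinColumn_iff.2 ⟨hcol, hmid⟩ r (Nat.le_of_lt_succ hr)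
  · rcases (Nat.le_of_lt_succ hr).lt_or_eq with hr' | rfl
    · rw [spinHeight_of_lt hr', hzx r (by lia), hpx r (by lia)]
    · rw [spinHeight_eq_add (c := c) hzlast, hpc, Nat.add_sub_cancel, hzx m le_rfl, hpx m le_rfl]

theorem mem_pathsBspin_iff (hn : 0 < n) {p : List (ℝ × ℝ)} :
    p ∈ pathsBspin n ε l ↔ ∃ z, IsSpinZigzag n l z ∧ p = spinPath ε n l z :=
  ⟨exists_eq_spinPath_of_mem_pathsBspin hn, fun ⟨_, hz, h⟩ => h ▸ spinPath_mem_pathsBspin hn hz⟩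

end SpinPaths

section SpinMoves

variable {n j r : ℕ} {ε : ℝ} {c l : ℤ} {y z : ℕ → ℤ} {b : Bool}
  {a : ℝ × ℝ} {p p' R : List (ℝ × ℝ)}

/-- `p'` arises from `p` by a lowering move of type `B_n` at `(j, l)`; this is `LoweredTo` without
the membership of the two paths in a set `P_{i,k}`. -/
def IsLoweringB (n : ℕ) (ε : ℝ) (j : ℕ) (l : ℤ) (p p' : List (ℝ × ℝ)) : Prop :=
  CanLower (.B n ε) p j l ∧
    if j = n then Replace1 p p' (2 * n - 1, l - 1 - ε) (2 * n - 1, l + 1 + ε)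
    else if j = n - 1 then
      Replace2 p p' ((iotaB n (j, l - 2)).1, l - 2) ((iotaB n (j, l - 2)).1, l + 2)
        (2 * n - 1, l - 1 + ε) (2 * n - 1, l + 1 - ε)
    else Replace1 p p' ((iotaB n (j, l - 2)).1, l - 2) ((iotaB n (j, l - 2)).1, l + 2)

theorem loweredTo_B_iff {i : ℕ} {k : ℤ} :
    LoweredTo (.B n ε) i k j l p p' ↔
      p ∈ P (.B n ε) i k ∧ p' ∈ P (.B n ε) i k ∧ IsLoweringB n ε j l p p' :=
  Iff.rfl

theorem Cp_subset_Cp_reverse : Cp (.B n ε) p b ⊆ Cp (.B n ε) p.reverse b := by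
  rintro jl ⟨hjl, h⟩
  refine ⟨hjl, h.imp ?_ ?_⟩
  · rintro ⟨r, hr, hrp, hpt, h0, hmid, h1, hlt⟩
    have hrev (s u : ℕ) (h : s + u + 1 = p.length) : pt p.reverse u = pt p s := by
      rw [pt_reverse (by lia), ← h]
      congr 1
      lia
    have hself : pt p.reverse (p.length - 1 - r) = pt p r := hrev _ _ (by lia)
    have hpred : pt p.reverse (p.length - 1 - r - 1) = pt p (r + 1) := hrev _ _ (by lia)
    have hsucc : pt p.reverse (p.length - 1 - r + 1) = pt p (r - 1) := hrev _ _ (by lia)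
    refine ⟨p.length - 1 - r, by lia, by rw [List.length_reverse]; lia, by rw [hself, hpt],
      h0, hmid, h1, ?_⟩
    rw [hpred, hself, hsucc]
    cases b <;> simpa [and_comm] using hlt
  · simp only [List.mem_reverse, imp_self]

theorem Cp_reverse : Cp (.B n ε) p.reverse b = Cp (.B n ε) p b := by
  refine Set.Subset.antisymm ?_ Cp_subset_Cp_reverse
  simpa using Cp_subset_Cp_reverse (p := p.reverse) (n := n) (ε := ε) (b := b)

theorem IsLoweringB.reverse (h : IsLoweringB n ε j l p p') :
    IsLoweringB n ε j l p.reverse p'.reverse := by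
  obtain ⟨hcan, h⟩ := h
  refine ⟨by rwa [CanLower, Cp_reverse], ?_⟩
  split_ifs at h ⊢
  exacts [h.reverse, h.reverse, h.reverse]

theorem iotaB_eq_spinColumn (hj : j < n) (hc : 4 ∣ c - (l + 2 * n - 1) - 2 * j) :
    iotaB n (j, c) = (spinColumn n l j, c) := by
  simp only [iotaB, spinColumn]
  grind

theorem pt_spinPath_append (h : r ≤ n) :
    pt (spinPath ε n l z ++ R) r = ((spinColumn n l r : ℝ), spinHeight ε n z r) := by
  rw [pt_append_left (by rw [length_spinPath]; lia), pt_spinPath h]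

theorem eq_of_mem_spinPath_append (hR : ∀ a ∈ R, ∀ r < n, a.1 ≠ spinColumn n l r)
    (hj : j < n) (ha : a ∈ spinPath ε n l z ++ R) (hcol : a.1 = spinColumn n l j) : a.2 = z j := by
  rcases List.mem_append.1 ha with ha | ha
  · rw [snd_eq_of_mem_spinPath ha hcol, spinHeight_of_lt hj]
  · exact absurd hcol (hR a ha j hj)

theorem IsSpinZigzag.mem_XB (hl : l % 2 = 1) (hz : IsSpinZigzag n l z) (hpos : 0 < j)
    (hj : j < n) : (j, z j) ∈ XB n := by
  have := hz.four_dvd hj.le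
  exact .inr ⟨hpos, hj, by lia⟩

theorem IsValley.lt_spinHeight_succ (hε : ε ∈ Set.Ioo 0 1) (hv : IsValley 2 n z j) (hj : j < n) :
    z j < spinHeight ε n z (j + 1) := by
  have hsucc := hv.succ_eq hj
  rcases (Nat.succ_le_of_lt hj).lt_or_eq with hj' | rfl
  · rw [spinHeight_of_lt hj', hsucc]
    exact_mod_cast (by lia : z j < z j + 2)
  · rw [spinHeight_eq_add (c := 1) hsucc, Nat.succ_sub_one]
    push_cast
    linarith [hε.1]

theorem IsValley.mem_Cp_spinPath_append (hε : ε ∈ Set.Ioo 0 1) (hl : l % 2 = 1)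
    (hz : IsSpinZigzag n l z) (hv : IsValley 2 n z j) (hj : j < n) :
    (j, z j) ∈ Cp (.B n ε) (spinPath ε n l z ++ R) true := by
  have hpos := hv.pos
  have hpred := hv.pred_eq
  refine ⟨hz.mem_XB hl hpos hj, .inl ⟨j, hpos, ?_, ?_⟩⟩
  · rw [List.length_append, length_spinPath]
    lia
  rw [iotaB_eq_spinColumn hj (hz.four_dvd hj.le), pt_spinPath_append hj.le,
    pt_spinPath_append (by lia), pt_spinPath_append hj, spinHeight_of_lt hj,
    spinHeight_of_lt (by lia), if_pos rfl]
  have hcol : spinColumn n l j ≠ 0 ∧ spinColumn n l j ≠ 2 * n - 1 ∧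
      spinColumn n l j ≠ 4 * n - 2 := by
    unfold spinColumn
    split_ifs <;> lia
  refine ⟨rfl, hcol.1, hcol.2.1, hcol.2.2, ?_, hv.lt_spinHeight_succ hε hj⟩
  exact Int.cast_lt.2 (by lia : z j < z (j - 1))

theorem IsSpinZigzag.eq_of_mem_Cp_spinPath_append (hz : IsSpinZigzag n l z)
    (hR : ∀ a ∈ R, ∀ r < n, a.1 ≠ spinColumn n l r) (hj : j < n) (hc : 4 ∣ c - z j)
    (h : (j, c) ∈ Cp (.B n ε) (spinPath ε n l z ++ R) b) : c = z j := by
  obtain ⟨-, ⟨r, -, hr, hpt, -⟩ | ⟨h, -⟩⟩ := h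
  · have := hz.four_dvd hj.le
    rw [iotaB_eq_spinColumn hj (l := l) (by lia)] at hpt
    have heq := eq_of_mem_spinPath_append hR hj (pt_mem (Nat.lt_of_succ_lt hr))
      (congrArg Prod.fst hpt)
    rw [hpt] at heq
    exact Int.cast_injective heq
  · exact absurd h hj.ne

theorem IsValley.canLower_spinPath_append_of_lt (hε : ε ∈ Set.Ioo 0 1) (hl : l % 2 = 1)
    (hz : IsSpinZigzag n l z) (hv : IsValley 2 n z j) (hj : j < n)
    (hR : ∀ a ∈ R, ∀ r < n, a.1 ≠ spinColumn n l r) :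
    CanLower (.B n ε) (spinPath ε n l z ++ R) j (z j + 2) := by
  have hrr : (rr (.B n ε) j : ℤ) = 2 := by simp [rr, hj.ne]
  rw [CanLower, hrr, add_sub_cancel_right]
  refine ⟨hv.mem_Cp_spinPath_append hε hl hz hj, fun h => ?_⟩
  have := hz.eq_of_mem_Cp_spinPath_append hR hj (by lia) h
  lia

theorem IsValley.spinHeight_last (hv : IsValley 2 n z n) : spinHeight ε n z n = z n + 1 - ε := by
  rw [spinHeight_self, hv.pred_eq]
  push_cast
  ring

theorem IsValley.spinHeight_fillValley_last (hv : IsValley 2 n z n) :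
    spinHeight ε n (fillValley 2 z n) n = z n + 3 + ε := by
  rw [spinHeight_self, fillValley_self, fillValley_of_ne (Nat.sub_one_lt_of_lt hv.pos).ne,
    hv.pred_eq]
  push_cast
  ring

theorem IsValley.snd_of_mem_spinPath_append (hv : IsValley 2 n z n)
    (hR : ∀ a ∈ R, a.1 = 2 * n - 1 → a.2 < z n + 1 - ε ∨ z n + 3 + ε < a.2)
    (ha : a ∈ spinPath ε n l z ++ R) (hcol : a.1 = 2 * n - 1) :
    a.2 < z n + 1 - ε ∨ a.2 = z n + 1 - ε ∨ z n + 3 + ε < a.2 := by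
  rcases List.mem_append.1 ha with ha | ha
  · rw [← cast_spinColumn_self (l := l)] at hcol
    exact .inr (.inl (by rw [snd_eq_of_mem_spinPath ha hcol, hv.spinHeight_last]))
  · exact (hR a ha hcol).imp_right .inr

theorem IsValley.canLower_spinPath_append_last (hε : ε ∈ Set.Ioo 0 1) (hl : l % 2 = 1)
    (hz : IsSpinZigzag n l z) (hv : IsValley 2 n z n)
    (hR : ∀ a ∈ R, a.1 = 2 * n - 1 → a.2 < z n + 1 - ε ∨ z n + 3 + ε < a.2) :
    CanLower (.B n ε) (spinPath ε n l z ++ R) n (z n + 2) := by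
  have hrr : (rr (.B n ε) n : ℤ) = 1 := by simp [rr]
  have hodd := hz.four_dvd le_rfl
  obtain ⟨hε0, hε1⟩ := hε
  have hcol := fun a => hv.snd_of_mem_spinPath_append (a := a) (l := l) hR
  rw [CanLower, hrr]
  refine ⟨⟨.inl ⟨rfl, by lia⟩, .inr ⟨rfl, ?_⟩⟩, ?_⟩
  · rw [if_pos rfl]
    refine ⟨List.mem_append_left _ (mem_spinPath.2 ⟨n, le_rfl, ?_⟩), fun h => ?_⟩
    · rw [hv.spinHeight_last, cast_spinColumn_self]
      push_cast
      ring_nf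
    · have := hcol _ h rfl
      push_cast at this
      rcases this with h | h | h <;> linarith
  · rintro ⟨-, ⟨r, -, -, -, -, hne, -⟩ | ⟨-, h⟩⟩
    · exact hne (by simp [iotaB])
    · rw [if_pos rfl] at h
      have := hcol _ h.1 rfl
      push_cast at this
      rcases this with h | h | h <;> linarith

theorem spinHeight_fillValley_of_ne (hrj : r ≠ j) (h : r < n ∨ j + 1 < n) :
    spinHeight ε n (fillValley 2 z j) r = spinHeight ε n z r := by
  by_cases hr : r < n
  · rw [spinHeight_of_lt hr, spinHeight_of_lt hr, fillValley_of_ne hrj]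
  · rw [spinHeight, spinHeight, if_neg hr, if_neg hr, fillValley_of_ne (by lia),
      fillValley_of_ne (by lia)]

theorem spinHeight_fillValley_self (hj : j < n) :
    spinHeight ε n (fillValley 2 z j) j = z j + 4 := by
  rw [spinHeight_of_lt hj, fillValley_self]
  push_cast
  ring

theorem replace1_spinPath (hr : r ≤ n)
    (h : ∀ s ≤ n, s ≠ r → spinHeight ε n y s = spinHeight ε n z s) :
    Replace1 (spinPath ε n l z) (spinPath ε n l y)
      (spinColumn n l r, spinHeight ε n z r) (spinColumn n l r, spinHeight ε n y r) :=
  replace1_map_range (Nat.lt_succ_of_le hr) fun s hs hsr => by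
    rw [h s (Nat.le_of_lt_succ hs) hsr]

theorem replace2_spinPath (hr : r < n)
    (h : ∀ s < n, s ≠ r → spinHeight ε n y s = spinHeight ε n z s) :
    Replace2 (spinPath ε n l z) (spinPath ε n l y)
      (spinColumn n l r, spinHeight ε n z r) (spinColumn n l r, spinHeight ε n y r)
      (spinColumn n l n, spinHeight ε n z n) (spinColumn n l n, spinHeight ε n y n) :=
  replace2_map_range (Nat.lt_succ_of_lt hr) (Nat.lt_succ_self n) hr.ne fun s hs hsr hsn => by
    rw [h s ((Nat.le_of_lt_succ hs).lt_of_ne hsn) hsr]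

theorem replace1_spinPath_fillValley (hj : j + 1 < n) :
    Replace1 (spinPath ε n l z) (spinPath ε n l (fillValley 2 z j))
      (spinColumn n l j, z j) (spinColumn n l j, z j + 4) := by
  have hjn : j < n := Nat.lt_of_succ_lt hj
  have h := replace1_spinPath (ε := ε) (l := l) hjn.le fun s _ hsj =>
    spinHeight_fillValley_of_ne (z := z) hsj (.inr hj)
  rwa [spinHeight_fillValley_self hjn, spinHeight_of_lt hjn] at h

theorem IsValley.replace1_spinPath_fillValley_last (hv : IsValley 2 n z n) :
    Replace1 (spinPath ε n l z) (spinPath ε n l (fillValley 2 z n))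
      (2 * n - 1, z n + 1 - ε) (2 * n - 1, z n + 3 + ε) := by
  have h := replace1_spinPath (ε := ε) (l := l) (le_refl n) fun s hs hsn =>
    spinHeight_fillValley_of_ne (z := z) hsn (.inl (hs.lt_of_ne hsn))
  rwa [hv.spinHeight_last, hv.spinHeight_fillValley_last, cast_spinColumn_self] at h

theorem IsValley.replace2_spinPath_fillValley (hv : IsValley 2 n z j) (hj : j + 1 = n) :
    Replace2 (spinPath ε n l z) (spinPath ε n l (fillValley 2 z j))
      (spinColumn n l j, z j) (spinColumn n l j, z j + 4)
      (2 * n - 1, z j + 1 + ε) (2 * n - 1, z j + 3 - ε) := by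
  subst hj
  have hjn : j < j + 1 := Nat.lt_succ_self j
  have hsucc := hv.succ_eq hjn
  have hlast : spinHeight ε (j + 1) z (j + 1) = z j + 1 + ε := by
    rw [spinHeight_eq_add (c := 1) hsucc, Nat.add_sub_cancel]
    push_cast
    ring
  have hlast' : spinHeight ε (j + 1) (fillValley 2 z j) (j + 1) = z j + 3 - ε := by
    rw [spinHeight_self, Nat.add_sub_cancel, fillValley_self, fillValley_of_ne j.succ_ne_self,
      hsucc]
    push_cast
    ring
  have h := replace2_spinPath (ε := ε) (l := l) hjn fun s hs hsj =>
    spinHeight_fillValley_of_ne (z := z) hsj (.inl hs)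
  rwa [spinHeight_fillValley_self hjn, spinHeight_of_lt hjn, hlast, hlast',
    cast_spinColumn_self] at h

theorem IsValley.mem_W (hl : l % 2 = 1) (hz : IsSpinZigzag n l z) (hv : IsValley 2 n z j) :
    (j, z j + 2) ∈ W (.B n ε) := by
  rcases hv.le.lt_or_eq with hj | rfl
  · simpa [W, rr, hj.ne] using! hz.mem_XB hl hv.pos hj
  · have := hz.four_dvd le_rfl
    exact .inl ⟨rfl, by simp only [rr, if_pos]; lia⟩

theorem IsValley.isLoweringB_spinPath_append (hε : ε ∈ Set.Ioo 0 1) (hl : l % 2 = 1)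
    (hz : IsSpinZigzag n l z) (hv : IsValley 2 n z j)
    (hcol : ∀ a ∈ R, ∀ r < n, a.1 ≠ spinColumn n l r)
    (hlast : ∀ a ∈ R, a.1 = 2 * n - 1 →
      a.2 < spinHeight ε n z n ∨ spinHeight ε n (fillValley 2 z j) n < a.2) :
    IsLoweringB n ε j (z j + 2) (spinPath ε n l z ++ R)
      (spinPath ε n l (fillValley 2 z j) ++ R) := by
  rcases hv.le.lt_or_eq with hj | rfl
  · refine ⟨hv.canLower_spinPath_append_of_lt hε hl hz hj hcol, ?_⟩
    rw [if_neg hj.ne, add_sub_cancel_right, iotaB_eq_spinColumn hj (hz.four_dvd hj.le)]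
    split_ifs with hjn
    · convert (hv.replace2_spinPath_fillValley (by lia)).append_right R using 2 <;>
        push_cast <;> ring
    · have hj1 : j + 1 < n := by lia
      convert (replace1_spinPath_fillValley hj1).append_right R using 2 <;> push_cast <;> ring
  · rw [hv.spinHeight_last, hv.spinHeight_fillValley_last] at hlast
    refine ⟨hv.canLower_spinPath_append_last hε hl hz hlast, ?_⟩
    rw [if_pos rfl]
    convert hv.replace1_spinPath_fillValley_last.append_right R using 2 <;> push_cast <;> ring

end SpinMoves

section TypeB

variable {n i j r : ℕ} {ε : ℝ} {k l l' : ℤ} {y y' z z' : ℕ → ℤ} {p : List (ℝ × ℝ)}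

theorem IsSpinZigzag.exists_isValley_fillValley_le (hz : IsSpinZigzag n l z)
    (hy : IsSpinZigzag n l y) (hle : ∀ r ≤ n, z r ≤ y r) (hne : ¬ ∀ r ≤ n, z r = y r) :
    ∃ j, IsValley 2 n z j ∧ ∀ r ≤ n, fillValley 2 z j r ≤ y r := by
  obtain ⟨r, hr, hzy⟩ : ∃ r ≤ n, z r ≠ y r := by simpa using hne
  obtain ⟨j, hv, hj⟩ := hz.isZigzag.exists_isValley two_pos hy.isZigzag
    (hz.zero_eq.trans hy.zero_eq.symm) hle hr hzy
  exact ⟨j, hv, fun r => fillValley_le hle hj⟩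

theorem mem_P_B_self_iff (hn : 0 < n) :
    p ∈ P (.B n ε) n k ↔ ∃ z, IsSpinZigzag n k z ∧ p = spinPath ε n k z := by
  simp only [P, pathsB, if_pos, mem_pathsBspin_iff hn]

theorem isPathLattice_B_self (hn : 0 < n) (hε : ε ∈ Set.Ioo 0 1) (hk : k % 2 = 1) :
    IsPathLattice (.B n ε) n k where
  map_fst_eq hp hq := by
    obtain ⟨z, -, rfl⟩ := (mem_P_B_self_iff hn).1 hp
    obtain ⟨y, -, rfl⟩ := (mem_P_B_self_iff hn).1 hq
    exact map_fst_spinPath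
  snd_lt_snd hp hrs hs hcol := by
    obtain ⟨z, -, rfl⟩ := (mem_P_B_self_iff hn).1 hp
    rw [length_spinPath] at hs
    rw [pt_spinPath (by lia), pt_spinPath (by lia)] at hcol
    exact absurd (spinColumn_injective (Int.cast_injective hcol)) hrs.ne
  topPath_mem hp hq := by
    obtain ⟨z, hz, rfl⟩ := (mem_P_B_self_iff hn).1 hp
    obtain ⟨y, hy, rfl⟩ := (mem_P_B_self_iff hn).1 hq
    exact (mem_P_B_self_iff hn).2 ⟨_, hz.min hy, topPath_spinPath hn hε hz hy⟩
  exists_loweredTo {p q} hq hp hqp hne := by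
    obtain ⟨z, hz, rfl⟩ := (mem_P_B_self_iff hn).1 hq
    obtain ⟨y, hy, rfl⟩ := (mem_P_B_self_iff hn).1 hp
    rw [weaklyAbove_spinPath hn hε hz hy] at hqp
    obtain ⟨j, hv, hle⟩ := hz.exists_isValley_fillValley_le hy hqp fun h => hne (spinPath_congr h)
    have hfill := hv.isSpinZigzag_fillValley hz
    have hmem := (mem_P_B_self_iff (ε := ε) hn).2 ⟨_, hfill, rfl⟩
    have hlower := hv.isLoweringB_spinPath_append (R := []) hε hk hz (by simp) (by simp)
    rw [List.append_nil, List.append_nil] at hlower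
    exact ⟨_, j, z j + 2, hv.mem_W hk hz, loweredTo_B_iff.2 ⟨hq, hmem, hlower⟩,
      (weaklyAbove_spinPath hn hε hfill hy).2 hle⟩

/-- The path obtained by running through the path of `pathsBspin n ε l` coded by `z` and then
backwards through the path of `pathsBspin n ε l'` coded by `y`. -/
noncomputable def doublePath (ε : ℝ) (n : ℕ) (l l' : ℤ) (z y : ℕ → ℤ) : List (ℝ × ℝ) :=
  spinPath ε n l z ++ (spinPath ε n l' y).reverse

theorem length_doublePath : (doublePath ε n l l' z y).length = 2 * n + 2 := by
  rw [doublePath, List.length_append, List.length_reverse, length_spinPath, length_spinPath]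
  ring

theorem reverse_doublePath : (doublePath ε n l l' z y).reverse = doublePath ε n l' l y z := by
  rw [doublePath, List.reverse_append, List.reverse_reverse, doublePath]

theorem pt_doublePath_left (h : r ≤ n) :
    pt (doublePath ε n l l' z y) r = ((spinColumn n l r : ℝ), spinHeight ε n z r) :=
  pt_spinPath_append h

theorem pt_doublePath_right (h : r ≤ n) :
    pt (doublePath ε n l l' z y) (2 * n + 1 - r) =
      ((spinColumn n l' r : ℝ), spinHeight ε n y r) := by
  have hrev := pt_reverse_sub (p := doublePath ε n l' l y z) (r := r)
    (by rw [length_doublePath]; lia)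
  rwa [reverse_doublePath, length_doublePath, pt_doublePath_left h] at hrev

theorem weaklyAbove_doublePath (hn : 0 < n) (hε : ε ∈ Set.Ioo 0 1) (hz : IsSpinZigzag n l z)
    (hz' : IsSpinZigzag n l z') (hy : IsSpinZigzag n l' y) (hy' : IsSpinZigzag n l' y') :
    WeaklyAbove (doublePath ε n l l' z y) (doublePath ε n l l' z' y') ↔
      (∀ r ≤ n, z r ≤ z' r) ∧ ∀ r ≤ n, y r ≤ y' r := by
  rw [doublePath, doublePath, weaklyAbove_append (by rw [length_spinPath, length_spinPath]),
    weaklyAbove_reverse, weaklyAbove_spinPath hn hε hz hz', weaklyAbove_spinPath hn hε hy hy']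

theorem topPath_doublePath (hn : 0 < n) (hε : ε ∈ Set.Ioo 0 1) (hz : IsSpinZigzag n l z)
    (hz' : IsSpinZigzag n l z') (hy : IsSpinZigzag n l' y) (hy' : IsSpinZigzag n l' y') :
    topPath (doublePath ε n l l' z y) (doublePath ε n l l' z' y') =
      doublePath ε n l l' (fun r => min (z r) (z' r)) fun r => min (y r) (y' r) := by
  rw [doublePath, doublePath, topPath_append (by rw [length_spinPath, length_spinPath]),
    topPath_reverse (by rw [length_spinPath, length_spinPath]), topPath_spinPath hn hε hz hz',
    topPath_spinPath hn hε hy hy', doublePath]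

theorem snd_lt_snd_doublePath (hll' : l % 4 = 3 ↔ l' % 4 ≠ 3)
    (hlast : spinHeight ε n y n < spinHeight ε n z n) {r s : ℕ} (hrs : r < s)
    (hs : s < 2 * n + 2)
    (hcol : (pt (doublePath ε n l l' z y) r).1 = (pt (doublePath ε n l l' z y) s).1) :
    (pt (doublePath ε n l l' z y) s).2 < (pt (doublePath ε n l l' z y) r).2 := by
  rcases le_or_gt s n with hsn | hsn
  · rw [pt_doublePath_left hsn, pt_doublePath_left (by lia)] at hcol
    exact absurd (spinColumn_injective (Int.cast_injective hcol)) hrs.ne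
  obtain ⟨s, hs', rfl⟩ : ∃ s' ≤ n, s = 2 * n + 1 - s' := ⟨2 * n + 1 - s, by lia, by lia⟩
  rcases le_or_gt r n with hrn | hrn
  · rw [pt_doublePath_left hrn, pt_doublePath_right hs'] at hcol ⊢
    obtain ⟨rfl, rfl⟩ := eq_and_eq_of_spinColumn_eq hll' hrn hs' (Int.cast_injective hcol)
    exact hlast
  · obtain ⟨r, hr', rfl⟩ : ∃ r' ≤ n, r = 2 * n + 1 - r' := ⟨2 * n + 1 - r, by lia, by lia⟩
    rw [pt_doublePath_right hr', pt_doublePath_right hs'] at hcol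
    have := spinColumn_injective (Int.cast_injective hcol)
    lia

theorem IsValley.isLoweringB_doublePath_left (hε : ε ∈ Set.Ioo 0 1) (hl : l % 2 = 1)
    (hll' : l % 4 = 3 ↔ l' % 4 ≠ 3) (hz : IsSpinZigzag n l z) (hv : IsValley 2 n z j)
    (hlast : spinHeight ε n y n < spinHeight ε n z n ∨
      spinHeight ε n (fillValley 2 z j) n < spinHeight ε n y n) :
    IsLoweringB n ε j (z j + 2) (doublePath ε n l l' z y)
      (doublePath ε n l l' (fillValley 2 z j) y) := by
  refine hv.isLoweringB_spinPath_append hε hl hz (fun a ha r hr => ?_) fun a ha hcol => ?_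
  · exact fst_ne_of_mem_spinPath hll' hr (List.mem_reverse.1 ha)
  · rw [← cast_spinColumn_self (l := l')] at hcol
    rwa [snd_eq_of_mem_spinPath (List.mem_reverse.1 ha) hcol]

theorem IsValley.isLoweringB_doublePath_right (hε : ε ∈ Set.Ioo 0 1) (hl' : l' % 2 = 1)
    (hll' : l % 4 = 3 ↔ l' % 4 ≠ 3) (hy : IsSpinZigzag n l' y) (hv : IsValley 2 n y j)
    (hlast : spinHeight ε n z n < spinHeight ε n y n ∨
      spinHeight ε n (fillValley 2 y j) n < spinHeight ε n z n) :
    IsLoweringB n ε j (y j + 2) (doublePath ε n l l' z y)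
      (doublePath ε n l l' z (fillValley 2 y j)) := by
  have h := (hv.isLoweringB_doublePath_left (l' := l) hε hl' (by lia) hy hlast).reverse
  rwa [reverse_doublePath, reverse_doublePath] at h

theorem mem_P_B_iff (hn : 0 < n) (hi : i ≠ n) :
    p ∈ P (.B n ε) i k ↔ ∃ z y, IsSpinZigzag n (k - (2 * n - 2 * i - 1)) z ∧
      IsSpinZigzag n (k + (2 * n - 2 * i - 1)) y ∧ spinHeight ε n y n < spinHeight ε n z n ∧
      p = doublePath ε n (k - (2 * n - 2 * i - 1)) (k + (2 * n - 2 * i - 1)) z y := by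
  simp only [P, pathsB, if_neg hi, Set.mem_ofPred_eq, mem_pathsBspin_iff hn]
  constructor
  · rintro ⟨_, _, ⟨z, hz, rfl⟩, ⟨y, hy, rfl⟩, rfl, -, hlast⟩
    rw [pt_spinPath le_rfl, pt_spinPath le_rfl] at hlast
    exact ⟨z, y, hz, hy, sub_pos.1 hlast, rfl⟩
  · rintro ⟨z, y, hz, hy, hlast, rfl⟩
    refine ⟨_, _, ⟨z, hz, rfl⟩, ⟨y, hy, rfl⟩, rfl, ?_⟩
    rw [pt_spinPath le_rfl, pt_spinPath le_rfl]
    exact ⟨by rw [spinColumn_self, spinColumn_self], sub_pos.2 hlast⟩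

theorem exists_loweredTo_B (hn : 0 < n) (hε : ε ∈ Set.Ioo 0 1) (hi : i < n) (hk : k % 2 = 0)
    {q : List (ℝ × ℝ)} (hq : q ∈ P (.B n ε) i k) (hp : p ∈ P (.B n ε) i k)
    (hqp : WeaklyAbove q p) (hne : q ≠ p) :
    ∃ q' j l, (j, l) ∈ W (.B n ε) ∧ LoweredTo (.B n ε) i k j l q q' ∧ WeaklyAbove q' p := by
  have hmem {p : List (ℝ × ℝ)} := mem_P_B_iff (p := p) (k := k) (ε := ε) hn hi.ne
  obtain ⟨z, y, hz, hy, hlast, rfl⟩ := hmem.1 hq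
  obtain ⟨z', y', hz', hy', hlast', rfl⟩ := hmem.1 hp
  set l := k - (2 * n - 2 * i - 1)
  set l' := k + (2 * n - 2 * i - 1)
  have hll' : l % 4 = 3 ↔ l' % 4 ≠ 3 := by lia
  obtain ⟨hzz', hyy'⟩ := (weaklyAbove_doublePath hn hε hz hz' hy hy').1 hqp
  by_cases hzeq : ∀ r ≤ n, z r = z' r
  · obtain ⟨j, hv, hle⟩ := hy.exists_isValley_fillValley_le hy' hyy' fun hyeq =>
      hne (by rw [doublePath, spinPath_congr hzeq, spinPath_congr hyeq, doublePath])
    have hfill := hv.isSpinZigzag_fillValley hy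
    have hlast'' : spinHeight ε n (fillValley 2 y j) n < spinHeight ε n z n := by
      rw [spinHeight_congr hzeq le_rfl]
      exact (spinHeight_mono hε hle le_rfl).trans_lt hlast'
    have hlower := hv.isLoweringB_doublePath_right hε (by lia) hll' hy (.inr hlast'')
    exact ⟨_, j, y j + 2, hv.mem_W (by lia) hy,
      loweredTo_B_iff.2 ⟨hq, hmem.2 ⟨_, _, hz, hfill, hlast'', rfl⟩, hlower⟩,
      (weaklyAbove_doublePath hn hε hz hz' hfill hy').2 ⟨hzz', hle⟩⟩
  · obtain ⟨j, hv, hle⟩ := hz.exists_isValley_fillValley_le hz' hzz' hzeq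
    have hfill := hv.isSpinZigzag_fillValley hz
    have hlast'' : spinHeight ε n y n < spinHeight ε n (fillValley 2 z j) n :=
      hlast.trans_le (spinHeight_mono hε (fun r _ => le_fillValley zero_le_two r) le_rfl)
    have hlower := hv.isLoweringB_doublePath_left hε (by lia) hll' hz (.inl hlast)
    exact ⟨_, j, z j + 2, hv.mem_W (by lia) hz,
      loweredTo_B_iff.2 ⟨hq, hmem.2 ⟨_, _, hfill, hy, hlast'', rfl⟩, hlower⟩,
      (weaklyAbove_doublePath hn hε hfill hz' hy hy').2 ⟨hle, hyy'⟩⟩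

theorem isPathLattice_B (hn : 0 < n) (hε : ε ∈ Set.Ioo 0 1) (hi : i < n) (hk : k % 2 = 0) :
    IsPathLattice (.B n ε) i k where
  map_fst_eq hp hq := by
    obtain ⟨z, y, -, -, -, rfl⟩ := (mem_P_B_iff hn hi.ne).1 hp
    obtain ⟨z', y', -, -, -, rfl⟩ := (mem_P_B_iff hn hi.ne).1 hq
    rw [doublePath, doublePath, List.map_append, List.map_append, List.map_reverse,
      List.map_reverse, map_fst_spinPath (z := z) (y := z'), map_fst_spinPath (z := y) (y := y')]
  snd_lt_snd hp hrs hs hcol := by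
    obtain ⟨z, y, -, -, hlast, rfl⟩ := (mem_P_B_iff hn hi.ne).1 hp
    rw [length_doublePath] at hs
    exact snd_lt_snd_doublePath (by lia) hlast hrs hs hcol
  topPath_mem hp hq := by
    obtain ⟨z, y, hz, hy, hlast, rfl⟩ := (mem_P_B_iff hn hi.ne).1 hp
    obtain ⟨z', y', hz', hy', hlast', rfl⟩ := (mem_P_B_iff hn hi.ne).1 hq
    refine (mem_P_B_iff hn hi.ne).2 ⟨_, _, hz.min hz', hy.min hy', ?_,
      topPath_doublePath hn hε hz hz' hy hy'⟩
    rw [spinHeight_min hn hε hz hz', spinHeight_min hn hε hy hy']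
    exact min_lt_min hlast hlast'
  exists_loweredTo := exists_loweredTo_B hn hε hi hk

end TypeB

theorem isPathLattice_of_mem_X {S : Setting} {ik : ℕ × ℤ} (hS : S.valid) (h : ik ∈ X S) :
    IsPathLattice S ik.1 ik.2 := by
  obtain ⟨i, k⟩ := ik
  rcases S with n | ⟨n, ε⟩
  · exact isPathLattice_A h
  · obtain ⟨hn, h0, h1⟩ := hS
    have hn' : 0 < n := by lia
    have hε : ε ∈ Set.Ioo 0 1 := ⟨h0, by linarith⟩
    rcases h with ⟨rfl, hk⟩ | ⟨-, hi, hk⟩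
    · exact isPathLattice_B_self hn' hε hk
    · exact isPathLattice_B hn' hε hi hk

theorem stmt9_general (S : Setting) (hS : S.valid) {T : ℕ} (w : Fin T → ℕ × ℤ)
    (hw : ∀ t, w t ∈ X S) (ps ps' : Fin T → List (ℝ × ℝ)) (hps : ps ∈ PBar S w)
    (hps' : ps' ∈ PBar S w) :
    ∃ ms : List (Bool × (ℕ × ℤ)), TMoveSeq S w ps' ps ms ∧
      ∀ jl : ℕ × ℤ, ¬((true, jl) ∈ ms ∧ (false, jl) ∈ ms) :=
  exists_tMoveSeq_of_isPathLattice hS (fun t => isPathLattice_of_mem_X hS (hw t)) hps hps'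

/-- any two non-overlapping tuples in `𝒫̄` are connected by a finite sequence
of raising and lowering moves at points of `W`, containing no inverse pair of moves (no site
occurs both for a raising and for a lowering move), all of whose intermediate tuples are
non-overlapping. -/
theorem stmt9 (S : Setting) (hS : S.valid) {T : ℕ} (hT : 1 ≤ T)
    (w : Fin T → ℕ × ℤ) (hw : IsSnake S w)
    (ps ps' : Fin T → List (ℝ × ℝ)) (hps : ps ∈ PBar S w) (hps' : ps' ∈ PBar S w) :
    ∃ ms : List (Bool × (ℕ × ℤ)), TMoveSeq S w ps' ps ms ∧
      ∀ jl : ℕ × ℤ, ¬((true, jl) ∈ ms ∧ (false, jl) ∈ ms) :=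
  stmt9_general S hS w hw.1 ps ps' hps hps'

end Paper
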